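/- arXiv:2312.03944 — 2 statements merged into one kernel-verified Lean document; each statement's English description precedes it below -/
import Mathlib

section
/- Let φ be a traveling wave with speed ℓ, normalized so that φ(0) = 1/2, and let (u_n)_{n≥0} be defined by u_0(x) = 1 for x ≥ 0 and u_0(x) = 0 for x < 0, and u_{n+1}(x) = g((q * u_n)(x)) for all n ≥ 0 and x ∈ ℝ. Then there exists x_0 ∈ ℝ such that sup_{x∈ℝ} |u_n(x) − φ(x − nℓ − x_0)| → 0 as n → ∞; consequently, med_n := inf{x : u_n(x) ≥ 1/2} satisfies med_n = nℓ + x_0 + o(1) as n → ∞. -/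
open MeasureTheory Filter Topology

/-- Convolution `(q * u)(x) = ∫ q(y) u(x - y) dy`. -/
noncomputable def conv (q u : ℝ → ℝ) (x : ℝ) : ℝ := ∫ y : ℝ, q y * u (x - y)

/-- The shifted kernel `q_ℓ(x) = q(x + ℓ)`. -/
def qshift (q : ℝ → ℝ) (ℓ : ℝ) (x : ℝ) : ℝ := q (x + ℓ)

/-- The bistable setting: a `C¹` compactly supported probability density `q`, and a
polynomial `P` (the recursion polynomial, i.e. `g` on `[0,1]`) with `P(0) = 0`, `P(1) = 1`,
`0 < P < 1` and `P' > 0` on `(0,1)`; the nonlinearity `f(x) = P(x) - x` has a unique zero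
`θ ∈ (0,1)` and `f'(0) < 0`, `f'(1) < 0` (equivalently `P'(0) < 1`, `P'(1) < 1`). -/
structure BistableSetting where
  q : ℝ → ℝ
  P : Polynomial ℝ
  θ : ℝ
  hq_diff : ContDiff ℝ 1 q
  hq_supp : HasCompactSupport q
  hq_nonneg : ∀ x, 0 ≤ q x
  hq_int : ∫ x : ℝ, q x = 1
  hP0 : P.eval 0 = 0
  hP1 : P.eval 1 = 1
  hP_range : ∀ x ∈ Set.Ioo (0 : ℝ) 1, 0 < P.eval x ∧ P.eval x < 1
  hP_mono : ∀ x ∈ Set.Ioo (0 : ℝ) 1, 0 < (Polynomial.derivative P).eval x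
  hθ_mem : θ ∈ Set.Ioo (0 : ℝ) 1
  hθ_zero : P.eval θ = θ
  hθ_unique : ∀ x ∈ Set.Ioo (0 : ℝ) 1, P.eval x = x → x = θ
  hf'0 : (Polynomial.derivative P).eval 0 < 1
  hf'1 : (Polynomial.derivative P).eval 1 < 1

/-- The nonlinearity `g`, equal to the polynomial `P` on `[0,1]` and extended linearly:
`g(x) = x + f'(0)·x` for `x < 0` and `g(x) = x + f'(1)(x-1)` for `x > 1`. -/
noncomputable def BistableSetting.g (S : BistableSetting) (x : ℝ) : ℝ :=
  if x < 0 then (Polynomial.derivative S.P).eval 0 * x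
  else if x ≤ 1 then S.P.eval x
  else 1 + (Polynomial.derivative S.P).eval 1 * (x - 1)

/-- A traveling wave with speed `ℓ`: a nondecreasing `C¹` function `φ` with
`φ = g(q_ℓ * φ)`, `φ(-∞) = 0` and `φ(+∞) = 1`. -/
structure IsTravelingWave (S : BistableSetting) (ℓ : ℝ) (φ : ℝ → ℝ) : Prop where
  mono : Monotone φ
  smooth : ContDiff ℝ 1 φ
  wave_eq : ∀ x, φ x = S.g (conv (qshift S.q ℓ) φ x)
  limit_bot : Tendsto φ atBot (𝓝 0)
  limit_top : Tendsto φ atTop (𝓝 1)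

namespace BistableSetting

/-- Derivative of the extended nonlinearity. -/
noncomputable def dg (S : BistableSetting) (x : ℝ) : ℝ :=
  (Polynomial.derivative S.P).eval (max 0 (min x 1))

lemma dg_cont (S : BistableSetting) : Continuous S.dg := by
  unfold dg
  exact (Polynomial.continuous _).comp (by fun_prop)

lemma dP_nonneg (S : BistableSetting) (x : ℝ) (hx : x ∈ Set.Icc (0:ℝ) 1) :
    0 ≤ (Polynomial.derivative S.P).eval x := by
  have hcl : Set.Icc (0:ℝ) 1 = closure (Set.Ioo (0:ℝ) 1) := (closure_Ioo (by norm_num)).symm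
  rw [hcl] at hx
  have hclosed : IsClosed {x : ℝ | 0 ≤ (Polynomial.derivative S.P).eval x} :=
    isClosed_le continuous_const (Polynomial.continuous _)
  exact closure_minimal (fun y hy => (S.hP_mono y hy).le) hclosed hx

lemma clamp_mem (x : ℝ) : max 0 (min x 1) ∈ Set.Icc (0:ℝ) 1 :=
  ⟨le_max_left _ _, max_le (by norm_num) (min_le_right _ _)⟩

lemma dg_nonneg (S : BistableSetting) (x : ℝ) : 0 ≤ S.dg x :=
  S.dP_nonneg _ (clamp_mem x)

lemma dg_bdd (S : BistableSetting) : ∃ L : ℝ, 0 < L ∧ ∀ x, S.dg x ≤ L := by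
  obtain ⟨C, hC⟩ := (isCompact_Icc (a := (0:ℝ)) (b := 1)).exists_bound_of_continuousOn
    (f := fun x => (Polynomial.derivative S.P).eval x) (Polynomial.continuous _).continuousOn
  refine ⟨max C 1, by positivity, fun x => ?_⟩
  exact le_trans (le_trans (le_abs_self _) (hC _ (clamp_mem x))) (le_max_left _ _)

lemma g_eq_P (S : BistableSetting) {x : ℝ} (hx : x ∈ Set.Icc (0:ℝ) 1) : S.g x = S.P.eval x := by
  unfold g
  rw [if_neg (not_lt.2 hx.1), if_pos hx.2]

lemma g_hasDeriv (S : BistableSetting) (x : ℝ) : HasDerivAt S.g (S.dg x) x := by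
  have key : ∀ x, S.g x = ∫ t in (0:ℝ)..x, S.dg t := by
    have hP : ∀ a b : ℝ, a ∈ Set.Icc (0:ℝ) 1 → b ∈ Set.Icc (0:ℝ) 1 → a ≤ b →
        ∫ t in a..b, S.dg t = S.P.eval b - S.P.eval a := by
      intro a b ha hb hab
      rw [← intervalIntegral.integral_eq_sub_of_hasDerivAt (f := fun t => S.P.eval t)
        (f' := fun t => (Polynomial.derivative S.P).eval t)
        (fun t _ => S.P.hasDerivAt t) ((Polynomial.continuous _).intervalIntegrable _ _)]
      apply intervalIntegral.integral_congr
      intro t ht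
      rw [Set.uIcc_of_le hab] at ht
      simp only [dg]
      rw [min_eq_left (ht.2.trans hb.2), max_eq_right (ha.1.trans ht.1)]
    intro x
    by_cases h0 : x < 0
    · rw [intervalIntegral.integral_symm]
      have : ∫ t in x..0, S.dg t = ∫ t in x..0, (Polynomial.derivative S.P).eval 0 := by
        apply intervalIntegral.integral_congr
        intro t ht
        rw [Set.uIcc_of_le h0.le] at ht
        simp only [dg]
        rw [max_eq_left ((min_le_left _ _).trans ht.2)]
      rw [this, g, if_pos h0]
      simp
      ring
    · push Not at h0
      by_cases h1 : x ≤ 1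
      · rw [hP 0 x ⟨le_rfl, zero_le_one⟩ ⟨h0, h1⟩ h0, S.g_eq_P ⟨h0, h1⟩, S.hP0, sub_zero]
      · push Not at h1
        rw [← intervalIntegral.integral_add_adjacent_intervals (b := 1)
          (S.dg_cont.intervalIntegrable _ _) (S.dg_cont.intervalIntegrable _ _),
          hP 0 1 ⟨le_rfl, zero_le_one⟩ ⟨zero_le_one, le_rfl⟩ zero_le_one]
        have : ∫ t in 1..x, S.dg t = ∫ t in 1..x, (Polynomial.derivative S.P).eval 1 := by
          apply intervalIntegral.integral_congr
          intro t ht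
          rw [Set.uIcc_of_le h1.le] at ht
          simp only [dg]
          rw [min_eq_right ht.1, max_eq_right zero_le_one]
        rw [this, g, if_neg (not_lt.2 h0), if_neg (not_le.2 h1), S.hP0, S.hP1]
        simp
        ring
  have : S.g = fun x => ∫ t in (0:ℝ)..x, S.dg t := funext key
  rw [this]
  exact S.dg_cont.integral_hasStrictDerivAt 0 x |>.hasDerivAt

lemma g_cont (S : BistableSetting) : Continuous S.g :=
  continuous_iff_continuousAt.2 fun x => (S.g_hasDeriv x).continuousAt

lemma g_mono (S : BistableSetting) : Monotone S.g :=
  monotone_of_deriv_nonneg (fun x => (S.g_hasDeriv x).differentiableAt)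
    (fun x => by rw [(S.g_hasDeriv x).deriv]; exact S.dg_nonneg x)

/-- Mean value estimate for `g`. -/
lemma g_mvt (S : BistableSetting) {x y C : ℝ} (hxy : x ≤ y) (hC : ∀ t ∈ Set.Icc x y, S.dg t ≤ C) :
    S.g y - S.g x ≤ C * (y - x) := by
  apply (convex_Icc x y).image_sub_le_mul_sub_of_deriv_le S.g_cont.continuousOn
    (fun t _ => (S.g_hasDeriv t).differentiableAt.differentiableWithinAt)
    _ x ⟨le_rfl, hxy⟩ y ⟨hxy, le_rfl⟩ hxy
  intro t ht
  rw [(S.g_hasDeriv t).deriv]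
  exact hC t (interior_subset ht)

lemma g_zero (S : BistableSetting) : S.g 0 = 0 := by
  rw [S.g_eq_P ⟨le_rfl, zero_le_one⟩, S.hP0]

lemma g_one (S : BistableSetting) : S.g 1 = 1 := by
  rw [S.g_eq_P ⟨zero_le_one, le_rfl⟩, S.hP1]

lemma g_strict (S : BistableSetting) : StrictMonoOn S.g (Set.Icc 0 1) := by
  apply strictMonoOn_of_deriv_pos (convex_Icc 0 1) S.g_cont.continuousOn
  intro x hx
  rw [interior_Icc] at hx
  rw [(S.g_hasDeriv x).deriv, dg, min_eq_left hx.2.le, max_eq_right hx.1.le]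
  exact S.hP_mono x hx

/-- Contraction near the stable states. -/
lemma dg_tail (S : BistableSetting) : ∃ β η : ℝ, 0 < β ∧ β < 1 ∧ 0 < η ∧
    (∀ t, t ≤ 2 * η → S.dg t ≤ β) ∧ (∀ t, 1 - 2 * η ≤ t → S.dg t ≤ β) := by
  obtain ⟨β, hβ, hβ1⟩ := exists_between (max_lt (max_lt S.hf'0 S.hf'1) (zero_lt_one (α := ℝ)))
  have hb0 : (Polynomial.derivative S.P).eval 0 < β :=
    ((le_max_left _ _).trans (le_max_left _ _)).trans_lt hβ
  have hb1 : (Polynomial.derivative S.P).eval 1 < β :=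
    ((le_max_right _ _).trans (le_max_left _ _)).trans_lt hβ
  have hbp : 0 < β := (le_max_right _ _).trans_lt hβ
  have c0 : ∀ᶠ t in 𝓝 (0:ℝ), S.dg t < β := by
    apply (S.dg_cont.tendsto 0).eventually_lt_const
    simpa [dg] using hb0
  have c1 : ∀ᶠ t in 𝓝 (1:ℝ), S.dg t < β := by
    apply (S.dg_cont.tendsto 1).eventually_lt_const
    simpa [dg] using hb1
  obtain ⟨e0, he0, h0⟩ := Metric.eventually_nhds_iff.1 c0
  obtain ⟨e1, he1, h1⟩ := Metric.eventually_nhds_iff.1 c1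
  refine ⟨β, min e0 e1 / 4, hbp, hβ1, by positivity, ?_, ?_⟩
  · intro t ht
    by_cases ht0 : t ≤ 0
    · have : S.dg t = S.dg 0 := by
        simp only [dg]
        rw [max_eq_left ((min_le_left _ _).trans ht0)]; simp
      rw [this]
      exact (h0 (by simpa using he0)).le
    · push Not at ht0
      apply (h0 _).le
      rw [Real.dist_eq, sub_zero, abs_of_pos ht0]
      have := min_le_left e0 e1
      linarith
  · intro t ht
    by_cases ht0 : 1 ≤ t
    · have : S.dg t = S.dg 1 := by
        simp only [dg]
        rw [min_eq_right ht0]; simp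
      rw [this]
      exact (h1 (by simpa using he1)).le
    · push Not at ht0
      apply (h1 _).le
      rw [Real.dist_eq, abs_of_neg (by linarith)]
      have := min_le_right e0 e1
      linarith

lemma exists_g_lt (S : BistableSetting) : ∀ x ∈ Set.Ioo 0 S.θ, S.g x < x := by
  obtain ⟨β, η, hβ0, hβ1, hη, h0, -⟩ := S.dg_tail
  intro x hx
  by_contra hcon
  push Not at hcon
  set t := min η (x / 2) with ht
  have htp : 0 < t := lt_min hη (by linarith [hx.1])
  have htx : t ≤ x := (min_le_right _ _).trans (by linarith [hx.1])
  have h1 : S.g t < t := by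
    have := S.g_mvt htp.le (C := β) (fun s hs => h0 s (by
      have := min_le_left η (x/2); linarith [hs.2]))
    rw [S.g_zero] at this
    nlinarith
  have : (0:ℝ) ∈ (fun s => S.g s - s) '' Set.Icc t x :=
    intermediate_value_Icc htx (S.g_cont.sub continuous_id).continuousOn
      ⟨by simp; linarith, by simp; linarith⟩
  obtain ⟨s, hs, hs0⟩ := this
  have hθ := S.hθ_mem
  have hs1 : s ∈ Set.Ioo (0:ℝ) 1 := ⟨by linarith [hs.1], by linarith [hs.2, hx.2, hθ.2]⟩
  have := S.hθ_unique s hs1 (by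
    rw [← S.g_eq_P ⟨hs1.1.le, hs1.2.le⟩]; simp only at hs0; linarith)
  linarith [hs.2, hx.2]

lemma exists_g_gt (S : BistableSetting) : ∀ x ∈ Set.Ioo S.θ 1, x < S.g x := by
  obtain ⟨β, η, hβ0, hβ1, hη, -, h0⟩ := S.dg_tail
  intro x hx
  by_contra hcon
  push Not at hcon
  set t := max (1 - η) ((x + 1) / 2) with ht
  have htp : t < 1 := max_lt (by linarith) (by linarith [hx.2])
  have htx : x ≤ t := le_trans (by linarith [hx.2]) (le_max_right _ _)
  have h1 : t < S.g t := by
    have := S.g_mvt htp.le (C := β) (fun s hs => h0 s (by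
      have := le_max_left (1 - η) ((x + 1)/2); linarith [hs.1]))
    rw [S.g_one] at this
    nlinarith
  have : (0:ℝ) ∈ (fun s => S.g s - s) '' Set.Icc x t :=
    intermediate_value_Icc htx (S.g_cont.sub continuous_id).continuousOn
      ⟨by simp; linarith, by simp; linarith⟩
  obtain ⟨s, hs, hs0⟩ := this
  have hθ := S.hθ_mem
  have hs1 : s ∈ Set.Ioo (0:ℝ) 1 := ⟨by linarith [hs.1, hx.1, hθ.1], by linarith [hs.2]⟩
  have := S.hθ_unique s hs1 (by
    rw [← S.g_eq_P ⟨hs1.1.le, hs1.2.le⟩]; simp only at hs0; linarith)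
  linarith [hs.1, hx.1]

end BistableSetting

/-- Facts about the kernel used throughout. -/
structure Ker (p : ℝ → ℝ) (K : ℝ) : Prop where
  cont : Continuous p
  nonneg : ∀ y, 0 ≤ p y
  int_one : ∫ y, p y = 1
  Kpos : 0 < K
  supp : ∀ y, p y ≠ 0 → |y| ≤ K

namespace Ker

variable {p : ℝ → ℝ} {K : ℝ}

lemma hcs (hp : Ker p K) : HasCompactSupport p := by
  apply HasCompactSupport.intro (isCompact_Icc (a := -K) (b := K))
  intro y hy
  by_contra hne
  exact hy (abs_le.1 (hp.supp y hne))

lemma integrable (hp : Ker p K) : Integrable p := hp.cont.integrable_of_hasCompactSupport hp.hcs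

lemma integrable_mul (hp : Ker p K) {w : ℝ → ℝ} (hw : Measurable w) {C : ℝ}
    (hC : ∀ x, |w x| ≤ C) (x : ℝ) : Integrable (fun y => p y * w (x - y)) := by
  apply hp.integrable.mul_bdd (c := C)
  · exact (hw.comp (measurable_const.sub measurable_id)).aestronglyMeasurable
  · exact Eventually.of_forall fun y => hC _

lemma integrable_mul_cont (hp : Ker p K) {w : ℝ → ℝ} (hw : Continuous w)
    (x : ℝ) : Integrable (fun y => p y * w (x - y)) := by
  apply Continuous.integrable_of_hasCompactSupport
  · exact hp.cont.mul (hw.comp (by fun_prop))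
  · exact hp.hcs.mul_right

lemma conv_mono (hp : Ker p K) {w₁ w₂ : ℝ → ℝ} {x : ℝ}
    (h₁ : Integrable (fun y => p y * w₁ (x - y))) (h₂ : Integrable (fun y => p y * w₂ (x - y)))
    (h : ∀ y, p y ≠ 0 → w₁ (x - y) ≤ w₂ (x - y)) : conv p w₁ x ≤ conv p w₂ x := by
  apply integral_mono h₁ h₂
  intro y
  by_cases hy : p y = 0
  · simp [hy]
  · exact mul_le_mul_of_nonneg_left (h y hy) (hp.nonneg y)

lemma conv_const (hp : Ker p K) (c x : ℝ) : conv p (fun _ => c) x = c := by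
  unfold conv
  rw [integral_mul_const, hp.int_one, one_mul]

lemma conv_le (hp : Ker p K) {w : ℝ → ℝ} {x c : ℝ}
    (h₁ : Integrable (fun y => p y * w (x - y)))
    (h : ∀ y, p y ≠ 0 → w (x - y) ≤ c) : conv p w x ≤ c := by
  rw [← hp.conv_const c x]
  exact hp.conv_mono h₁ (hp.integrable.mul_const c) h

lemma le_conv (hp : Ker p K) {w : ℝ → ℝ} {x c : ℝ}
    (h₁ : Integrable (fun y => p y * w (x - y)))
    (h : ∀ y, p y ≠ 0 → c ≤ w (x - y)) : c ≤ conv p w x := by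
  rw [← hp.conv_const c x]
  exact hp.conv_mono (hp.integrable.mul_const c) h₁ h

lemma conv_add_const (hp : Ker p K) {w : ℝ → ℝ} {x : ℝ} (c : ℝ)
    (h₁ : Integrable (fun y => p y * w (x - y))) :
    conv p (fun z => w z + c) x = conv p w x + c := by
  conv_rhs => rw [← hp.conv_const c x]
  unfold conv
  rw [← integral_add h₁ (hp.integrable.mul_const c)]
  congr 1; ext y; ring

lemma conv_shift (w : ℝ → ℝ) (ξ x : ℝ) :
    conv p (fun z => w (z + ξ)) x = conv p w (x + ξ) := by
  unfold conv
  congr 1; ext y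
  show p y * w (x - y + ξ) = _
  rw [show x - y + ξ = x + ξ - y by ring]

lemma conv_pos (hp : Ker p K) {w : ℝ → ℝ} (hw : Continuous w) (h0 : ∀ x, 0 ≤ w x)
    {x y : ℝ} (hy : 0 < p y) (hwy : 0 < w (x - y)) : 0 < conv p w x := by
  apply Continuous.integral_pos_of_hasCompactSupport_nonneg_nonzero (x := y)
  · exact hp.cont.mul (hw.comp (by fun_prop))
  · exact hp.hcs.mul_right
  · exact fun y => mul_nonneg (hp.nonneg y) (h0 _)
  · exact (mul_pos hy hwy).ne'

lemma conv_cont (hp : Ker p K) {w : ℝ → ℝ} (hw : Continuous w) {C : ℝ}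
    (hC : ∀ x, |w x| ≤ C) : Continuous (conv p w) := by
  unfold conv
  apply continuous_of_dominated (bound := fun y => p y * C)
  · intro x; exact (hp.integrable_mul_cont hw x).aestronglyMeasurable
  · intro x
    refine Eventually.of_forall fun y => ?_
    rw [norm_mul, Real.norm_of_nonneg (hp.nonneg y)]
    exact mul_le_mul_of_nonneg_left (hC _) (hp.nonneg y)
  · exact hp.integrable.mul_const C
  · exact Eventually.of_forall fun y => continuous_const.mul (hw.comp (by fun_prop))

lemma conv_deriv (hp : Ker p K) {w : ℝ → ℝ} (hw : ContDiff ℝ 1 w) (x : ℝ) :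
    HasDerivAt (conv p w) (conv p (deriv w) x) x := by
  have hd : Continuous (deriv w) := hw.continuous_deriv le_rfl
  obtain ⟨C, hC⟩ := (isCompact_Icc (a := x - 1 - K) (b := x + 1 + K)).exists_bound_of_continuousOn
    hd.continuousOn
  refine (hasDerivAt_integral_of_dominated_loc_of_deriv_le (μ := volume)
    (F := fun x y => p y * w (x - y))
    (F' := fun x y => p y * deriv w (x - y)) (bound := fun y => p y * C)
    (Metric.ball_mem_nhds x one_pos) ?_ (hp.integrable_mul_cont hw.continuous x)
    (hp.integrable_mul_cont hd x).aestronglyMeasurable ?_ (hp.integrable.mul_const C) ?_).2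
  · exact Eventually.of_forall fun z =>
      (hp.integrable_mul_cont hw.continuous z).aestronglyMeasurable
  · refine Eventually.of_forall fun y z hz => ?_
    by_cases hy : p y = 0
    · simp [hy]
    rw [norm_mul, Real.norm_of_nonneg (hp.nonneg y)]
    apply mul_le_mul_of_nonneg_left (hC _ _) (hp.nonneg y)
    have := abs_le.1 (hp.supp y hy)
    rw [Metric.mem_ball, Real.dist_eq] at hz
    have := abs_lt.1 hz
    constructor <;> linarith
  · refine Eventually.of_forall fun y z hz => ?_
    have h1 : HasDerivAt w (deriv w (z - y)) (z - y) :=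
      (hw.differentiable one_ne_zero _).hasDerivAt
    exact (h1.comp_sub_const z y).const_mul (p y)

/-- An interval where `p` is bounded below. -/
lemma exists_lower (hp : Ker p K) {y : ℝ} (hy : 0 < p y) :
    ∃ s m : ℝ, 0 < s ∧ 0 < m ∧ ∀ t, |t| ≤ s → m ≤ p (y + t) := by
  have : ∀ᶠ t in 𝓝 y, p y / 2 < p t :=
    (hp.cont.tendsto y).eventually_const_lt (by linarith)
  obtain ⟨e, he, h⟩ := Metric.eventually_nhds_iff.1 this
  refine ⟨e / 2, p y / 2, by positivity, by positivity, fun t ht => (h ?_).le⟩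
  rw [Real.dist_eq]
  simp
  linarith

end Ker

/-- Uniform data for spreading. -/
lemma exists_spread {p : ℝ → ℝ} {K : ℝ} (hp : Ker p K) {y₁ y₂ : ℝ}
    (h₁ : 0 < p y₁) (h₂ : 0 < p y₂) : ∃ s m : ℝ, 0 < s ∧ 0 < m ∧
      (∀ t, |t| ≤ s → m ≤ p (y₁ + t)) ∧ (∀ t, |t| ≤ s → m ≤ p (y₂ + t)) := by
  obtain ⟨s, m, hs, hm, h⟩ := hp.exists_lower h₁
  obtain ⟨s', m', hs', hm', h'⟩ := hp.exists_lower h₂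
  exact ⟨min s s', min m m', by positivity, by positivity,
    fun t ht => (min_le_left _ _).trans (h t (ht.trans (min_le_left _ _))),
    fun t ht => (min_le_right _ _).trans (h' t (ht.trans (min_le_right _ _)))⟩

/-- A set stable under adding points where `p > 0` is everything. -/
lemma spread_set {p : ℝ → ℝ} {K : ℝ} (hp : Ker p K) {y₁ y₂ : ℝ} (hy₁ : y₁ < 0) (hy₂ : 0 < y₂)
    (h₁ : 0 < p y₁) (h₂ : 0 < p y₂) (Z : Set ℝ) (z : ℝ) (hz : z ∈ Z)
    (hZ : ∀ x y, 0 < p y → x - y ∈ Z → x ∈ Z) (x : ℝ) : x ∈ Z := by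
  obtain ⟨s, m, hs, hm, hs₁, hs₂⟩ := exists_spread hp h₁ h₂
  set M := |z| + |y₁| + |y₂| with hM
  have key : ∀ k : ℕ, ∃ c, |c| ≤ M ∧ ∀ t, |t| ≤ k * s → c + t ∈ Z := by
    intro k
    induction k with
    | zero =>
      refine ⟨z, by rw [hM]; linarith [abs_nonneg y₁, abs_nonneg y₂], fun t ht => ?_⟩
      have : t = 0 := by simpa using ht
      simpa [this] using hz
    | succ k ih =>
      obtain ⟨c, hc, hcZ⟩ := ih
      have hsplit : ∀ t : ℝ, |t| ≤ (k + 1 : ℕ) * s → ∃ t₁ t₂, |t₁| ≤ k * s ∧ |t₂| ≤ s ∧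
          t = t₁ + t₂ := by
        intro t ht
        refine ⟨t * (k / (k + 1)), t * (1 / (k + 1)), ?_, ?_, by field_simp⟩
        · rw [abs_mul, abs_of_nonneg (a := (k:ℝ) / (k+1)) (by positivity)]
          calc |t| * (k / (k+1)) ≤ ((k+1:ℕ) * s) * (k/(k+1)) := by gcongr
            _ = k * s := by push_cast; field_simp
        · rw [abs_mul, abs_of_nonneg (a := (1:ℝ) / (k+1)) (by positivity)]
          calc |t| * (1 / (k+1)) ≤ ((k+1:ℕ) * s) * (1/(k+1)) := by gcongr
            _ = s := by push_cast; field_simp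
      have hMz := abs_nonneg z
      rw [abs_le] at hc
      by_cases hc0 : 0 ≤ c
      · refine ⟨c + y₁, ?_, ?_⟩
        · rw [abs_le]; rw [abs_of_neg hy₁, abs_of_pos hy₂] at *
          constructor <;> linarith
        · intro t ht
          obtain ⟨t₁, t₂, ht₁, ht₂, rfl⟩ := hsplit t ht
          apply hZ _ (y₁ + t₂) (hm.trans_le (hs₁ _ ht₂))
          convert hcZ t₁ ht₁ using 1; ring
      · push Not at hc0
        refine ⟨c + y₂, ?_, ?_⟩
        · rw [abs_le]; rw [abs_of_neg hy₁, abs_of_pos hy₂] at *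
          constructor <;> linarith
        · intro t ht
          obtain ⟨t₁, t₂, ht₁, ht₂, rfl⟩ := hsplit t ht
          apply hZ _ (y₂ + t₂) (hm.trans_le (hs₂ _ ht₂))
          convert hcZ t₁ ht₁ using 1; ring
  obtain ⟨k, hk⟩ := exists_nat_ge ((|x| + M) / s)
  obtain ⟨c, hc, hcZ⟩ := key k
  have := hcZ (x - c) (by
    rw [div_le_iff₀ hs] at hk
    exact (abs_sub _ _).trans (by linarith))
  simpa using this

lemma exists_ker (S : BistableSetting) (ℓ : ℝ) : ∃ K, Ker (qshift S.q ℓ) K := by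
  obtain ⟨R, hR⟩ := S.hq_supp.isCompact.isBounded.subset_closedBall 0
  refine ⟨|R| + |ℓ| + 1, ?_, ?_, ?_, by positivity, ?_⟩
  · exact S.hq_diff.continuous.comp (by fun_prop)
  · exact fun y => S.hq_nonneg _
  · unfold qshift
    rw [integral_add_right_eq_self S.q ℓ, S.hq_int]
  · intro y hy
    have h1 : y + ℓ ∈ tsupport S.q := subset_tsupport _ hy
    have h2 := hR h1
    rw [Metric.mem_closedBall, Real.dist_eq, sub_zero] at h2
    have h3 : |y| ≤ |y + ℓ| + |ℓ| := by
      have := abs_sub (y + ℓ) ℓ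
      simpa using this
    linarith [le_abs_self R]

namespace IsTravelingWave

variable {S : BistableSetting} {ℓ : ℝ} {φ : ℝ → ℝ} {K : ℝ}

lemma nonneg (h : IsTravelingWave S ℓ φ) (x : ℝ) : 0 ≤ φ x :=
  h.mono.le_of_tendsto h.limit_bot x

lemma le_one (h : IsTravelingWave S ℓ φ) (x : ℝ) : φ x ≤ 1 :=
  h.mono.ge_of_tendsto h.limit_top x

lemma cont (h : IsTravelingWave S ℓ φ) : Continuous φ := h.smooth.continuous

lemma abs_le_one (h : IsTravelingWave S ℓ φ) (x : ℝ) : |φ x| ≤ 1 := by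
  rw [abs_of_nonneg (h.nonneg x)]; exact h.le_one x

lemma exists_eq (h : IsTravelingWave S ℓ φ) {t : ℝ} (ht : t ∈ Set.Ioo (0:ℝ) 1) : ∃ x, φ x = t := by
  obtain ⟨a, ha⟩ := (h.limit_bot.eventually_lt_const ht.1).exists
  obtain ⟨b, hb⟩ := (h.limit_top.eventually_const_lt ht.2).exists
  have := mem_range_of_exists_le_of_exists_ge h.cont ⟨a, ha.le⟩ ⟨b, hb.le⟩
  exact this

lemma integ (h : IsTravelingWave S ℓ φ) (hp : Ker (qshift S.q ℓ) K) (x : ℝ) :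
    Integrable (fun y => qshift S.q ℓ y * φ (x - y)) := hp.integrable_mul_cont h.cont x

lemma exists_neg (h : IsTravelingWave S ℓ φ) (hp : Ker (qshift S.q ℓ) K) :
    ∃ y < 0, 0 < qshift S.q ℓ y := by
  by_contra hcon
  push Not at hcon
  have hθ := S.hθ_mem
  obtain ⟨x, hx⟩ := h.exists_eq (t := S.θ / 2) ⟨by linarith [hθ.1], by linarith [hθ.1, hθ.2]⟩
  have h1 : conv (qshift S.q ℓ) φ x ≤ φ x := by
    apply hp.conv_le (h.integ hp x)
    intro y hy
    apply h.mono
    by_contra hlt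
    push Not at hlt
    exact hy (le_antisymm (hcon y (by linarith)) (hp.nonneg y))
  have h2 := S.g_mono h1
  rw [← h.wave_eq] at h2
  have h3 := S.exists_g_lt (φ x) ⟨by rw [hx]; linarith [hθ.1], by rw [hx]; linarith [hθ.1]⟩
  linarith

lemma exists_pos (h : IsTravelingWave S ℓ φ) (hp : Ker (qshift S.q ℓ) K) :
    ∃ y > 0, 0 < qshift S.q ℓ y := by
  by_contra hcon
  push Not at hcon
  have hθ := S.hθ_mem
  obtain ⟨x, hx⟩ := h.exists_eq (t := (S.θ + 1) / 2) ⟨by linarith [hθ.1], by linarith [hθ.1, hθ.2]⟩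
  have h1 : φ x ≤ conv (qshift S.q ℓ) φ x := by
    apply hp.le_conv (h.integ hp x)
    intro y hy
    apply h.mono
    by_contra hlt
    push Not at hlt
    exact hy (le_antisymm (hcon y (by linarith)) (hp.nonneg y))
  have h2 := S.g_mono h1
  rw [← h.wave_eq] at h2
  have h3 := S.exists_g_gt (φ x) ⟨by rw [hx]; linarith [hθ.2], by rw [hx]; linarith [hθ.2]⟩
  linarith

lemma conv_mem (h : IsTravelingWave S ℓ φ) (hp : Ker (qshift S.q ℓ) K) (x : ℝ) :
    conv (qshift S.q ℓ) φ x ∈ Set.Icc (0:ℝ) 1 :=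
  ⟨hp.le_conv (h.integ hp x) fun _ _ => h.nonneg _, hp.conv_le (h.integ hp x) fun _ _ => h.le_one _⟩

lemma pos (h : IsTravelingWave S ℓ φ) (hp : Ker (qshift S.q ℓ) K) (x : ℝ) : 0 < φ x := by
  obtain ⟨y, hy0, hy⟩ := h.exists_neg hp
  have step : ∀ x, φ x ≤ 0 → φ (x - y) ≤ 0 := by
    intro x hx
    by_contra hcon
    push Not at hcon
    have h1 := hp.conv_pos h.cont h.nonneg hy hcon
    have h2 := S.g_strict ⟨le_rfl, zero_le_one⟩ (h.conv_mem hp x) h1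
    rw [S.g_zero, ← h.wave_eq] at h2
    linarith
  by_contra hcon
  push Not at hcon
  have key : ∀ k : ℕ, φ (x + k * (-y)) ≤ 0 := by
    intro k
    induction k with
    | zero => simpa using hcon
    | succ k ih => convert step _ ih using 2; push_cast; ring
  obtain ⟨b, hb⟩ := (h.limit_top.eventually_const_lt (zero_lt_one (α := ℝ))).exists
  obtain ⟨k, hk⟩ := exists_nat_ge ((b - x) / (-y))
  rw [div_le_iff₀ (by linarith)] at hk
  have := h.mono (show b ≤ x + k * (-y) by linarith)
  linarith [key k]

lemma lt_one (h : IsTravelingWave S ℓ φ) (hp : Ker (qshift S.q ℓ) K) (x : ℝ) : φ x < 1 := by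
  obtain ⟨y, hy0, hy⟩ := h.exists_pos hp
  have step : ∀ x, 1 ≤ φ x → 1 ≤ φ (x - y) := by
    intro x hx
    by_contra hcon
    push Not at hcon
    have h1 := hp.conv_pos (w := fun x => 1 - φ x) (x := x) (continuous_const.sub h.cont)
      (fun x => by linarith [h.le_one x]) hy (by linarith)
    have h1' : conv (qshift S.q ℓ) φ x < 1 := by
      have e : conv (qshift S.q ℓ) (fun x => 1 - φ x) x = 1 - conv (qshift S.q ℓ) φ x := by
        conv_rhs => rw [← hp.conv_const 1 x]
        unfold conv
        rw [← integral_sub (hp.integrable.mul_const 1) (h.integ hp x)]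
        congr 1; ext y; ring
      linarith
    have h2 := S.g_strict (h.conv_mem hp x) ⟨zero_le_one, le_rfl⟩ h1'
    rw [S.g_one, ← h.wave_eq] at h2
    linarith
  by_contra hcon
  push Not at hcon
  have key : ∀ k : ℕ, 1 ≤ φ (x - k * y) := by
    intro k
    induction k with
    | zero => simpa using hcon
    | succ k ih => convert step _ ih using 2; push_cast; ring
  obtain ⟨b, hb⟩ := (h.limit_bot.eventually_lt_const (zero_lt_one (α := ℝ))).exists
  obtain ⟨k, hk⟩ := exists_nat_ge ((x - b) / y)
  rw [div_le_iff₀ (by linarith)] at hk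
  have := h.mono (show x - k * y ≤ b by linarith)
  linarith [key k]

lemma conv_mem' (h : IsTravelingWave S ℓ φ) (hp : Ker (qshift S.q ℓ) K) (x : ℝ) :
    conv (qshift S.q ℓ) φ x ∈ Set.Ioo (0:ℝ) 1 := by
  have hm := h.conv_mem hp x
  have e := h.wave_eq x
  refine ⟨lt_of_le_of_ne hm.1 ?_, lt_of_le_of_ne hm.2 ?_⟩
  · intro h0
    rw [← h0, S.g_zero] at e
    linarith [h.pos hp x]
  · intro h0
    rw [h0, S.g_one] at e
    linarith [h.lt_one hp x]

lemma deriv_eq (h : IsTravelingWave S ℓ φ) (hp : Ker (qshift S.q ℓ) K) (x : ℝ) :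
    deriv φ x = S.dg (conv (qshift S.q ℓ) φ x) * conv (qshift S.q ℓ) (deriv φ) x := by
  have e : φ = S.g ∘ conv (qshift S.q ℓ) φ := funext h.wave_eq
  conv_lhs => rw [e]
  exact ((S.g_hasDeriv _).comp x (hp.conv_deriv h.smooth x)).deriv

lemma deriv_cont (h : IsTravelingWave S ℓ φ) : Continuous (deriv φ) :=
  h.smooth.continuous_deriv le_rfl

lemma deriv_nonneg (h : IsTravelingWave S ℓ φ) (x : ℝ) : 0 ≤ deriv φ x := h.mono.deriv_nonneg

lemma differentiable (h : IsTravelingWave S ℓ φ) : Differentiable ℝ φ :=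
  h.smooth.differentiable one_ne_zero

lemma deriv_pos (h : IsTravelingWave S ℓ φ) (hp : Ker (qshift S.q ℓ) K) (x : ℝ) :
    0 < deriv φ x := by
  obtain ⟨y₁, hy₁, h₁⟩ := h.exists_neg hp
  obtain ⟨y₂, hy₂, h₂⟩ := h.exists_pos hp
  have hex : ∃ z, 0 < deriv φ z := by
    by_contra hcon
    push Not at hcon
    have h0 : ∀ z, deriv φ z = 0 := fun z => le_antisymm (hcon z) (h.deriv_nonneg z)
    have hc := is_const_of_deriv_eq_zero h.differentiable h0
    obtain ⟨a, ha⟩ := h.exists_eq (t := 1/2) (by norm_num)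
    obtain ⟨b, hb⟩ := h.exists_eq (t := 1/3) (by norm_num)
    have := hc a b
    rw [ha, hb] at this
    norm_num at this
  obtain ⟨z, hz⟩ := hex
  refine spread_set hp hy₁ hy₂ h₁ h₂ {x | 0 < deriv φ x} z hz ?_ x
  intro x y hy hxy
  show 0 < deriv φ x
  rw [h.deriv_eq hp]
  apply mul_pos
  · have hm := h.conv_mem' hp x
    rw [BistableSetting.dg, min_eq_left hm.2.le, max_eq_right hm.1.le]
    exact S.hP_mono _ hm
  · exact hp.conv_pos h.deriv_cont h.deriv_nonneg hy hxy

lemma strictMono (h : IsTravelingWave S ℓ φ) (hp : Ker (qshift S.q ℓ) K) : StrictMono φ :=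
  strictMono_of_deriv_pos (h.deriv_pos hp)

lemma deriv_le (h : IsTravelingWave S ℓ φ) (hp : Ker (qshift S.q ℓ) K) :
    ∃ D : ℝ, 0 < D ∧ ∀ x, deriv φ x ≤ D * (φ (x + K) - φ (x - K)) := by
  obtain ⟨C, hC⟩ := (isCompact_Icc (a := -K) (b := K)).exists_bound_of_continuousOn
    hp.cont.continuousOn
  obtain ⟨L, hL0, hL⟩ := S.dg_bdd
  have hKK : -K ≤ K := by linarith [hp.Kpos]
  have hconv : ∀ x, conv (qshift S.q ℓ) (deriv φ) x ≤ max C 1 * (φ (x + K) - φ (x - K)) := by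
    intro x
    have e1 : conv (qshift S.q ℓ) (deriv φ) x
        = ∫ y in (-K)..K, qshift S.q ℓ y * deriv φ (x - y) := by
      rw [intervalIntegral.integral_of_le hKK, ← integral_Icc_eq_integral_Ioc]
      symm
      apply setIntegral_eq_integral_of_forall_compl_eq_zero
      intro y hy
      have : qshift S.q ℓ y = 0 := by
        by_contra hne
        exact hy (abs_le.1 (hp.supp y hne))
      rw [this, zero_mul]
    have e2 : ∫ y in (-K)..K, max C 1 * deriv φ (x - y) = max C 1 * (φ (x + K) - φ (x - K)) := by
      rw [intervalIntegral.integral_const_mul, intervalIntegral.integral_comp_sub_left,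
        intervalIntegral.integral_deriv_eq_sub' φ rfl (fun z _ => h.differentiable z)
          h.deriv_cont.continuousOn]
      simp
    rw [e1, ← e2]
    have hc2 : Continuous fun y => deriv φ (x - y) := h.deriv_cont.comp (by fun_prop)
    apply intervalIntegral.integral_mono_on hKK
      ((hp.cont.mul hc2).intervalIntegrable _ _)
      ((continuous_const.mul hc2).intervalIntegrable _ _)
    intro y hy
    exact mul_le_mul_of_nonneg_right
      (((le_abs_self _).trans (hC y hy)).trans (le_max_left _ _)) (h.deriv_nonneg _)
  refine ⟨L * max C 1, by positivity, fun x => ?_⟩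
  rw [h.deriv_eq hp]
  have h0 : 0 ≤ conv (qshift S.q ℓ) (deriv φ) x :=
    hp.le_conv (hp.integrable_mul_cont h.deriv_cont x) fun _ _ => h.deriv_nonneg _
  calc _ ≤ L * conv (qshift S.q ℓ) (deriv φ) x := mul_le_mul_of_nonneg_right (hL _) h0
    _ ≤ L * (max C 1 * (φ (x + K) - φ (x - K))) := mul_le_mul_of_nonneg_left (hconv x) hL0.le
    _ = _ := by ring

/-- Global Lipschitz bound. -/
lemma lip (h : IsTravelingWave S ℓ φ) (hp : Ker (qshift S.q ℓ) K) :
    ∃ D : ℝ, 0 < D ∧ ∀ x y, x ≤ y → φ y - φ x ≤ D * (y - x) := by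
  obtain ⟨D, hD, hd⟩ := h.deriv_le hp
  refine ⟨D, hD, fun x y hxy => ?_⟩
  refine image_sub_le_mul_sub_of_deriv_le h.differentiable (fun z => ?_) hxy
  have := hd z
  nlinarith [h.le_one (z + K), h.nonneg (z - K)]

/-- Small slope in the tails. -/
lemma tail_slope (h : IsTravelingWave S ℓ φ) (hp : Ker (qshift S.q ℓ) K) {κ : ℝ} (hκ : 0 < κ) :
    ∃ R : ℝ, 0 < R ∧ ∀ x, R ≤ |x| → ∀ δ, 0 ≤ δ → δ ≤ 1 → φ x - φ (x - δ) ≤ κ * δ := by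
  obtain ⟨D, hD, hd⟩ := h.deriv_le hp
  have hκD : 0 < κ / D := by positivity
  obtain ⟨a, ha⟩ := (h.limit_bot.eventually_lt_const hκD).exists_forall_of_atBot
  obtain ⟨b, hb⟩ := (h.limit_top.eventually_const_lt (show 1 - κ / D < 1 by linarith)).exists_forall_of_atTop
  have hK := hp.Kpos
  refine ⟨|a| + |b| + K + 2, by positivity, fun x hx δ hδ hδ1 => ?_⟩
  have hder : ∀ z ∈ Set.Icc (x - δ) x, deriv φ z ≤ κ := by
    intro z hz
    refine (hd z).trans ?_
    have : φ (z + K) - φ (z - K) ≤ κ / D := by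
      rcases le_total 0 x with h0 | h0
      · rw [abs_of_nonneg h0] at hx
        have := hb (z - K) (by linarith [hz.1, le_abs_self b, abs_nonneg a])
        linarith [h.le_one (z + K)]
      · rw [abs_of_nonpos h0] at hx
        have := ha (z + K) (by linarith [hz.2, neg_abs_le a, abs_nonneg b])
        linarith [h.nonneg (z - K)]
    calc _ ≤ D * (κ / D) := mul_le_mul_of_nonneg_left this hD.le
      _ = κ := by field_simp
  have := (convex_Icc (x - δ) x).image_sub_le_mul_sub_of_deriv_le h.cont.continuousOn
    (fun t _ => (h.differentiable t).differentiableWithinAt)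
    (fun t ht => hder t (interior_subset ht)) (x - δ) ⟨le_rfl, by linarith⟩ x
      ⟨by linarith, le_rfl⟩ (by linarith)
  simpa using this

/-- Stability estimates: perturbed translates of the wave are super/sub solutions. -/
lemma stability (h : IsTravelingWave S ℓ φ) (hp : Ker (qshift S.q ℓ) K) :
    ∃ β τ ε₀ : ℝ, 0 < β ∧ β < 1 ∧ 0 < τ ∧ 0 < ε₀ ∧ ∀ ε, 0 ≤ ε → ε ≤ ε₀ → ∀ x,
      S.g (conv (qshift S.q ℓ) φ x + ε) ≤ φ (x + τ * ε) + β * ε ∧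
      φ (x - τ * ε) - β * ε ≤ S.g (conv (qshift S.q ℓ) φ x - ε) := by
  obtain ⟨β, η, hβ0, hβ1, hη, ht0, ht1⟩ := S.dg_tail
  obtain ⟨L, hL0, hL⟩ := S.dg_bdd
  obtain ⟨a, ha⟩ := (h.limit_bot.eventually_lt_const hη).exists_forall_of_atBot
  obtain ⟨b, hb⟩ := (h.limit_top.eventually_const_lt
    (show 1 - η < 1 by linarith)).exists_forall_of_atTop
  have hK := hp.Kpos
  set A := a - K with hA
  set B := b + K with hB
  -- lower bound for the slope in the middle
  obtain ⟨c, hc0, hc⟩ : ∃ c > 0, ∀ x ∈ Set.Icc (A - 1) (B + 1), c ≤ deriv φ x := by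
    by_cases hne : (Set.Icc (A - 1) (B + 1)).Nonempty
    · obtain ⟨z, hz, hmin⟩ := isCompact_Icc.exists_isMinOn hne h.deriv_cont.continuousOn
      exact ⟨deriv φ z, h.deriv_pos hp z, fun x hx => hmin hx⟩
    · exact ⟨1, one_pos, fun x hx => absurd ⟨x, hx⟩ hne⟩
  have hslope : ∀ x y, A - 1 ≤ x → x ≤ y → y ≤ B + 1 → c * (y - x) ≤ φ y - φ x := by
    intro x y hx hxy hy
    refine (convex_Icc x y).mul_sub_le_image_sub_of_le_deriv h.cont.continuousOn
      (fun t _ => (h.differentiable t).differentiableWithinAt)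
      (fun t ht => ?_) x ⟨le_rfl, hxy⟩ y ⟨hxy, le_rfl⟩ hxy
    have := interior_subset ht
    exact hc t ⟨hx.trans this.1, this.2.trans hy⟩
  have hlow : ∀ x, x ≤ A → conv (qshift S.q ℓ) φ x ≤ η := by
    intro x hx
    apply hp.conv_le (h.integ hp x)
    intro y hy
    have := abs_le.1 (hp.supp y hy)
    exact (ha _ (by linarith)).le
  have hhigh : ∀ x, B ≤ x → 1 - η ≤ conv (qshift S.q ℓ) φ x := by
    intro x hx
    apply hp.le_conv (h.integ hp x)
    intro y hy
    have := abs_le.1 (hp.supp y hy)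
    exact (hb _ (by linarith)).le
  refine ⟨β, L / c, min η (c / L), hβ0, hβ1, by positivity, by positivity, ?_⟩
  intro ε hε hε1 x
  have hεη : ε ≤ η := hε1.trans (min_le_left _ _)
  have hεc : L / c * ε ≤ 1 := by
    calc L / c * ε ≤ L / c * (c / L) :=
          mul_le_mul_of_nonneg_left (hε1.trans (min_le_right _ _)) (by positivity)
      _ = 1 := by field_simp
  have hτ0 : 0 ≤ L / c * ε := by positivity
  have hcc : c * (L / c * ε) = L * ε := by field_simp
  have e := h.wave_eq x
  set w := conv (qshift S.q ℓ) φ x with hw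
  by_cases hmid : A < x ∧ x < B
  · constructor
    · have h1 := S.g_mvt (x := w) (y := w + ε) (C := L) (by linarith) (fun t _ => hL t)
      have h2 := hslope x (x + L / c * ε) (by linarith) (by linarith) (by linarith)
      have : 0 ≤ β * ε := by positivity
      have h3 : c * (x + L / c * ε - x) = L * ε := by rw [← hcc]; ring
      rw [h3] at h2
      nlinarith
    · have h1 := S.g_mvt (x := w - ε) (y := w) (C := L) (by linarith) (fun t _ => hL t)
      have h2 := hslope (x - L / c * ε) x (by linarith) (by linarith) (by linarith)
      have : 0 ≤ β * ε := by positivity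
      have h3 : c * (x - (x - L / c * ε)) = L * ε := by rw [← hcc]; ring
      rw [h3] at h2
      nlinarith
  · have hd : ∀ t, w - ε ≤ t → t ≤ w + ε → S.dg t ≤ β := by
      intro t h1 h2
      rcases le_or_gt x A with h3 | h3
      · exact ht0 t (by linarith [hlow x h3])
      · have h4 : B ≤ x := by
          by_contra h5
          push Not at h5
          exact hmid ⟨h3, h5⟩
        exact ht1 t (by linarith [hhigh x h4])
    constructor
    · have h1 := S.g_mvt (x := w) (y := w + ε) (C := β) (by linarith)
        (fun t ht => hd t (by linarith [ht.1]) (by linarith [ht.2]))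
      have h2 := h.mono (show x ≤ x + L / c * ε by linarith)
      nlinarith
    · have h1 := S.g_mvt (x := w - ε) (y := w) (C := β) (by linarith)
        (fun t ht => hd t (by linarith [ht.1]) (by linarith [ht.2]))
      have h2 := h.mono (show x - L / c * ε ≤ x by linarith)
      nlinarith

end IsTravelingWave

/-- The recursion in the moving frame. -/
structure Dyn (S : BistableSetting) (ℓ : ℝ) (v : ℕ → ℝ → ℝ) : Prop where
  mono : ∀ n, Monotone (v n)
  nonneg : ∀ n x, 0 ≤ v n x
  le_one : ∀ n x, v n x ≤ 1
  step : ∀ n x, v (n + 1) x = S.g (conv (qshift S.q ℓ) (v n) x)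
  start : ∀ x, v 0 x = if 0 ≤ x then 1 else 0

namespace Dyn

variable {S : BistableSetting} {ℓ : ℝ} {φ : ℝ → ℝ} {K : ℝ} {v : ℕ → ℝ → ℝ}

lemma integ (d : Dyn S ℓ v) (hp : Ker (qshift S.q ℓ) K) (n : ℕ) (x : ℝ) :
    Integrable (fun y => qshift S.q ℓ y * v n (x - y)) :=
  hp.integrable_mul (d.mono n).measurable (C := 1)
    (fun x => by rw [abs_of_nonneg (d.nonneg n x)]; exact d.le_one n x) x

lemma phi_integ (h : IsTravelingWave S ℓ φ) (hp : Ker (qshift S.q ℓ) K) (ξ c x : ℝ) :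
    Integrable (fun y => qshift S.q ℓ y * (fun z => φ (z + ξ) + c) (x - y)) :=
  hp.integrable_mul_cont (w := fun z => φ (z + ξ) + c)
    ((h.cont.comp (continuous_id.add continuous_const)).add continuous_const) x

lemma phi_conv (h : IsTravelingWave S ℓ φ) (hp : Ker (qshift S.q ℓ) K) (ξ c x : ℝ) :
    conv (qshift S.q ℓ) (fun z => φ (z + ξ) + c) x = conv (qshift S.q ℓ) φ (x + ξ) + c := by
  rw [hp.conv_add_const (w := fun z => φ (z + ξ)), Ker.conv_shift]
  exact hp.integrable_mul_cont (w := fun z => φ (z + ξ))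
    (h.cont.comp (continuous_id.add continuous_const)) x

lemma iter_upper (d : Dyn S ℓ v) (h : IsTravelingWave S ℓ φ) (hp : Ker (qshift S.q ℓ) K)
    {β τ ε₀ : ℝ} (hβ0 : 0 < β) (hβ1 : β < 1)
    (hst : ∀ ε, 0 ≤ ε → ε ≤ ε₀ → ∀ x,
      S.g (conv (qshift S.q ℓ) φ x + ε) ≤ φ (x + τ * ε) + β * ε)
    {n : ℕ} {ξ ε : ℝ} (hε : 0 ≤ ε) (hε0 : ε ≤ ε₀) (hn : ∀ x, v n x ≤ φ (x + ξ) + ε) (j : ℕ) :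
    ∀ x, v (n + j) x ≤ φ (x + (ξ + τ / (1 - β) * ε * (1 - β ^ j))) + β ^ j * ε := by
  induction j with
  | zero => simpa using hn
  | succ j ih =>
    intro x
    have hb1 : β ^ j ≤ 1 := pow_le_one₀ hβ0.le hβ1.le
    have hb0 : 0 < β ^ j := pow_pos hβ0 j
    rw [← add_assoc, d.step]
    have h1 := hp.conv_mono
      (w₂ := fun z => φ (z + (ξ + τ / (1 - β) * ε * (1 - β ^ j))) + β ^ j * ε)
      (d.integ hp (n + j) x)
      (phi_integ h hp (ξ + τ / (1 - β) * ε * (1 - β ^ j)) (β ^ j * ε) x) (fun y _ => ih _)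
    rw [phi_conv h hp] at h1
    refine (S.g_mono h1).trans ((hst _ (by positivity) (by nlinarith) _).trans (le_of_eq ?_))
    have : (1 - β) ≠ 0 := by linarith
    congr 1
    · congr 1
      field_simp
      ring
    · ring

lemma iter_lower (d : Dyn S ℓ v) (h : IsTravelingWave S ℓ φ) (hp : Ker (qshift S.q ℓ) K)
    {β τ ε₀ : ℝ} (hβ0 : 0 < β) (hβ1 : β < 1)
    (hst : ∀ ε, 0 ≤ ε → ε ≤ ε₀ → ∀ x,
      φ (x - τ * ε) - β * ε ≤ S.g (conv (qshift S.q ℓ) φ x - ε))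
    {n : ℕ} {ξ ε : ℝ} (hε : 0 ≤ ε) (hε0 : ε ≤ ε₀) (hn : ∀ x, φ (x + ξ) - ε ≤ v n x) (j : ℕ) :
    ∀ x, φ (x + (ξ - τ / (1 - β) * ε * (1 - β ^ j))) - β ^ j * ε ≤ v (n + j) x := by
  induction j with
  | zero => simpa using hn
  | succ j ih =>
    intro x
    have hb1 : β ^ j ≤ 1 := pow_le_one₀ hβ0.le hβ1.le
    have hb0 : 0 < β ^ j := pow_pos hβ0 j
    rw [← add_assoc, d.step]
    have h1 := hp.conv_mono
      (w₁ := fun z => φ (z + (ξ - τ / (1 - β) * ε * (1 - β ^ j))) + -(β ^ j * ε))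
      (phi_integ h hp (ξ - τ / (1 - β) * ε * (1 - β ^ j)) (-(β ^ j * ε)) x)
      (d.integ hp (n + j) x) (fun y _ => by
        have := ih (x - y); linarith)
    rw [phi_conv h hp, ← sub_eq_add_neg] at h1
    refine le_trans (le_trans (le_of_eq ?_) (hst _ (by positivity) (by nlinarith) _)) (S.g_mono h1)
    have : (1 - β) ≠ 0 := by linarith
    congr 1
    · congr 1
      field_simp
      ring
    · ring

/-- Shifts that are eventually upper barriers. -/
def barr (φ : ℝ → ℝ) (v : ℕ → ℝ → ℝ) : Set ℝ :=
  {ξ | ∀ ε > 0, ∀ᶠ n in atTop, ∀ x, v n x ≤ φ (x + ξ) + ε}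

lemma barr_intro (d : Dyn S ℓ v) (h : IsTravelingWave S ℓ φ) (hp : Ker (qshift S.q ℓ) K)
    {β τ ε₀ : ℝ} (hβ0 : 0 < β) (hβ1 : β < 1) (hτ : 0 < τ)
    (hst : ∀ ε, 0 ≤ ε → ε ≤ ε₀ → ∀ x,
      S.g (conv (qshift S.q ℓ) φ x + ε) ≤ φ (x + τ * ε) + β * ε)
    {n : ℕ} {ξ ε : ℝ} (hε : 0 ≤ ε) (hε0 : ε ≤ ε₀) (hn : ∀ x, v n x ≤ φ (x + ξ) + ε) :
    ξ + τ / (1 - β) * ε ∈ barr φ v := by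
  intro e he
  have hlim : Tendsto (fun j : ℕ => β ^ j * ε) atTop (𝓝 0) := by
    simpa using (tendsto_pow_atTop_nhds_zero_of_lt_one hβ0.le hβ1).mul_const ε
  obtain ⟨N, hN⟩ := (hlim.eventually_lt_const he).exists_forall_of_atTop
  filter_upwards [eventually_ge_atTop (n + N)] with m hm x
  obtain ⟨j, rfl⟩ := Nat.exists_eq_add_of_le (show n ≤ m by omega)
  have h1 := d.iter_upper h hp hβ0 hβ1 hst hε hε0 hn j x
  have h2 := hN j (by omega)
  have hb0 : 0 < β ^ j := pow_pos hβ0 j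
  have hc : 0 ≤ τ / (1 - β) * ε := mul_nonneg (div_nonneg hτ.le (by linarith)) hε
  have h3 : φ (x + (ξ + τ / (1 - β) * ε * (1 - β ^ j))) ≤ φ (x + (ξ + τ / (1 - β) * ε)) := by
    apply h.mono
    nlinarith
  linarith

lemma barr_nonempty (d : Dyn S ℓ v) (h : IsTravelingWave S ℓ φ) (hp : Ker (qshift S.q ℓ) K) :
    (barr φ v).Nonempty := by
  obtain ⟨β, τ, ε₀, hβ0, hβ1, hτ, hε₀, hst⟩ := h.stability hp
  obtain ⟨b, hb⟩ := (h.limit_top.eventually_const_lt (show 1 - ε₀ < 1 by linarith)).exists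
  refine ⟨_, d.barr_intro h hp hβ0 hβ1 hτ (fun ε h1 h2 x => (hst ε h1 h2 x).1)
    (n := 0) (ξ := b) hε₀.le le_rfl ?_⟩
  intro x
  rw [d.start]
  split_ifs with hx
  · have := h.mono (show b ≤ x + b by linarith)
    linarith
  · linarith [h.nonneg (x + b)]

lemma barr_bdd (d : Dyn S ℓ v) (h : IsTravelingWave S ℓ φ) (hp : Ker (qshift S.q ℓ) K) :
    BddBelow (barr φ v) := by
  obtain ⟨β, τ, ε₀, hβ0, hβ1, hτ, hε₀, hst⟩ := h.stability hp
  obtain ⟨b, hb⟩ := (h.limit_bot.eventually_lt_const hε₀).exists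
  have h0 : ∀ x, φ (x + b) - ε₀ ≤ v 0 x := by
    intro x
    rw [d.start]
    split_ifs with hx
    · linarith [h.le_one (x + b)]
    · have := h.mono (show x + b ≤ b by linarith)
      linarith
  have hj := d.iter_lower h hp hβ0 hβ1 (fun ε h1 h2 x => (hst ε h1 h2 x).2) hε₀.le le_rfl h0
  have hc : 0 ≤ τ / (1 - β) * ε₀ := mul_nonneg (div_nonneg hτ.le (by linarith)) hε₀.le
  refine ⟨b - τ / (1 - β) * ε₀, fun ξ hξ => ?_⟩
  by_contra hcon
  push Not at hcon
  have hlt := h.strictMono hp hcon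
  set gap := φ (b - τ / (1 - β) * ε₀) - φ ξ with hgap
  have hlim : Tendsto (fun j : ℕ => β ^ j * ε₀) atTop (𝓝 0) := by
    simpa using (tendsto_pow_atTop_nhds_zero_of_lt_one hβ0.le hβ1).mul_const ε₀
  obtain ⟨n, h1, h2⟩ := ((hlim.eventually_lt_const (show 0 < gap / 2 by linarith)).and
    (hξ (gap / 2) (by linarith))).exists
  have h3 := hj n 0
  have h4 := h2 0
  rw [zero_add, zero_add] at *
  have hb0 : 0 < β ^ n := pow_pos hβ0 n
  have h5 : φ (b - τ / (1 - β) * ε₀) ≤ φ (b - τ / (1 - β) * ε₀ * (1 - β ^ n)) := by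
    apply h.mono
    nlinarith
  linarith

lemma barr_sInf (d : Dyn S ℓ v) (h : IsTravelingWave S ℓ φ) (hp : Ker (qshift S.q ℓ) K) :
    sInf (barr φ v) ∈ barr φ v := by
  obtain ⟨D, hD, hlip⟩ := h.lip hp
  intro ε hε
  obtain ⟨ξ, hξ, hlt⟩ := exists_lt_of_csInf_lt (d.barr_nonempty h hp)
    (show sInf (barr φ v) < sInf (barr φ v) + ε / (2 * D) by
      have : 0 < ε / (2 * D) := by positivity
      linarith)
  have hle := csInf_le (d.barr_bdd h hp) hξ
  filter_upwards [hξ (ε / 2) (by linarith)] with n hn x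
  have h1 := hn x
  have h2 := hlip (x + sInf (barr φ v)) (x + ξ) (by linarith)
  have h3 : D * (x + ξ - (x + sInf (barr φ v))) ≤ D * (ε / (2 * D)) :=
    mul_le_mul_of_nonneg_left (by linarith) hD.le
  have h4 : D * (ε / (2 * D)) = ε / 2 := by field_simp
  linarith

/-- Overlap of two intervals. -/
lemma overlap {s r t : ℝ} (hs : 0 < s) (hr : 0 < r) (ht : |t| ≤ r + s / 2) :
    ∃ e, ∀ y ∈ Set.Icc e (e + min (s / 2) r), |y| ≤ s ∧ |t - y| ≤ r := by
  have h1 := min_le_left (s / 2) r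
  have h2 := min_le_right (s / 2) r
  rw [abs_le] at ht
  rcases le_total 0 t with h0 | h0
  · rcases le_total t r with h3 | h3
    · refine ⟨0, fun y hy => ?_⟩
      rw [abs_le, abs_le]
      refine ⟨⟨?_, ?_⟩, ?_, ?_⟩ <;> linarith [hy.1, hy.2]
    · refine ⟨t - r, fun y hy => ?_⟩
      rw [abs_le, abs_le]
      refine ⟨⟨?_, ?_⟩, ?_, ?_⟩ <;> linarith [hy.1, hy.2]
  · rcases le_total (-r) t with h3 | h3
    · refine ⟨-min (s / 2) r, fun y hy => ?_⟩
      rw [abs_le, abs_le]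
      refine ⟨⟨?_, ?_⟩, ?_, ?_⟩ <;> linarith [hy.1, hy.2]
    · refine ⟨t + r - min (s / 2) r, fun y hy => ?_⟩
      rw [abs_le, abs_le]
      refine ⟨⟨?_, ?_⟩, ?_, ?_⟩ <;> linarith [hy.1, hy.2]

/-- Integral lower bound. -/
lemma conv_gap (d : Dyn S ℓ v) (h : IsTravelingWave S ℓ φ) (hp : Ker (qshift S.q ℓ) K)
    {ξ ε γ m ρ e x : ℝ} {n : ℕ} (hm : 0 < m) (hγ : 0 < γ) (hρ : 0 < ρ) (hε : 0 ≤ ε)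
    (hn : ∀ x, v n x ≤ φ (x + ξ) + ε)
    (hJ : ∀ y ∈ Set.Icc e (e + ρ), m ≤ qshift S.q ℓ y ∧ v n (x - y) ≤ φ (x - y + ξ) - γ) :
    conv (qshift S.q ℓ) (v n) x ≤ conv (qshift S.q ℓ) φ (x + ξ) + ε - m * γ * ρ := by
  rw [← phi_conv h hp ξ ε x]
  have hI := phi_integ h hp ξ ε x
  have hv := d.integ hp n x
  have hind : Integrable (Set.indicator (Set.Icc e (e + ρ)) (fun _ => m * γ)) :=
    (integrable_indicator_iff measurableSet_Icc).2 continuous_const.integrableOn_Icc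
  have e1 : ∫ y, Set.indicator (Set.Icc e (e + ρ)) (fun _ => m * γ) y = m * γ * ρ := by
    rw [integral_indicator measurableSet_Icc]
    simp [hρ.le]
    ring
  unfold conv
  rw [← e1, ← integral_sub hI hind]
  apply integral_mono hv (hI.sub hind)
  intro y
  show qshift S.q ℓ y * v n (x - y) ≤ qshift S.q ℓ y * (φ (x - y + ξ) + ε)
    - Set.indicator (Set.Icc e (e + ρ)) (fun _ => m * γ) y
  have hp0 := hp.nonneg y
  by_cases hy : y ∈ Set.Icc e (e + ρ)
  · rw [Set.indicator_of_mem hy]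
    obtain ⟨h1, h2⟩ := hJ y hy
    have h3 : qshift S.q ℓ y * v n (x - y) ≤ qshift S.q ℓ y * (φ (x - y + ξ) - γ) :=
      mul_le_mul_of_nonneg_left h2 hp0
    have h4 : m * γ ≤ qshift S.q ℓ y * γ := mul_le_mul_of_nonneg_right h1 hγ.le
    have h5 : 0 ≤ qshift S.q ℓ y * ε := mul_nonneg hp0 hε
    nlinarith
  · rw [Set.indicator_of_notMem hy, sub_zero]
    exact mul_le_mul_of_nonneg_left (hn _) hp0

/-- One step of the strong comparison principle. -/
lemma spread_one (d : Dyn S ℓ v) (h : IsTravelingWave S ℓ φ) (hp : Ker (qshift S.q ℓ) K)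
    {ξ : ℝ} (hξ : ξ ∈ barr φ v) {y₁ y₂ s m M : ℝ} (hy₁ : y₁ < 0) (hy₂ : 0 < y₂)
    (hs : 0 < s) (hm : 0 < m) (hs₁ : ∀ t, |t| ≤ s → m ≤ qshift S.q ℓ (y₁ + t))
    (hs₂ : ∀ t, |t| ≤ s → m ≤ qshift S.q ℓ (y₂ + t)) (hM₁ : -y₁ ≤ M) (hM₂ : y₂ ≤ M)
    {r γ : ℝ} (hr : 0 < r) (hγ : 0 < γ) :
    ∃ γ' > 0, ∀ᶠ n in atTop, ∀ z, |z| ≤ M → (∀ t, |t| ≤ r → v n (z + t) ≤ φ (z + t + ξ) - γ) →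
      ∃ z', |z'| ≤ M ∧ ∀ t, |t| ≤ r + s / 2 → v (n + 1) (z' + t) ≤ φ (z' + t + ξ) - γ' := by
  set ρ := min (s / 2) r with hρdef
  have hρ : 0 < ρ := by positivity
  set γ₁ := m * γ * ρ / 2 with hγ₁
  have hγ₁p : 0 < γ₁ := by positivity
  set B := M + r + s with hB
  -- minimal gap
  have hcont : Continuous fun x => φ (x + ξ) - S.g (conv (qshift S.q ℓ) φ (x + ξ) - γ₁) := by
    have c1 := hp.conv_cont h.cont h.abs_le_one
    have c2 : Continuous fun x : ℝ => x + ξ := by fun_prop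
    exact (h.cont.comp c2).sub (S.g_cont.comp ((c1.comp c2).sub continuous_const))
  have hpos : ∀ x, 0 < φ (x + ξ) - S.g (conv (qshift S.q ℓ) φ (x + ξ) - γ₁) := by
    intro x
    rw [h.wave_eq (x + ξ)]
    have hmem := h.conv_mem' hp (x + ξ)
    set w := conv (qshift S.q ℓ) φ (x + ξ)
    have h1 : S.g (w - γ₁) ≤ S.g (max 0 (w - γ₁)) := S.g_mono (le_max_right _ _)
    have h2 : S.g (max 0 (w - γ₁)) < S.g w :=
      S.g_strict ⟨le_max_left _ _, max_le zero_le_one (by linarith [hmem.2])⟩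
        ⟨hmem.1.le, hmem.2.le⟩ (max_lt hmem.1 (by linarith))
    linarith
  have hBne : (Set.Icc (-B) B).Nonempty := ⟨0, by constructor <;> simp only [hB] <;> linarith⟩
  obtain ⟨x₀, -, hmin⟩ := isCompact_Icc.exists_isMinOn hBne hcont.continuousOn
  refine ⟨_, hpos x₀, ?_⟩
  filter_upwards [hξ γ₁ hγ₁p] with n hn z hz hgap
  have main : ∀ y, (∀ t, |t| ≤ s → m ≤ qshift S.q ℓ (y + t)) → |z + y| ≤ M →
      ∃ z', |z'| ≤ M ∧ ∀ t, |t| ≤ r + s / 2 → v (n + 1) (z' + t) ≤ φ (z' + t + ξ) -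
        (φ (x₀ + ξ) - S.g (conv (qshift S.q ℓ) φ (x₀ + ξ) - γ₁)) := by
    intro y hy hzy
    refine ⟨z + y, hzy, fun t ht => ?_⟩
    obtain ⟨e, he⟩ := overlap hs hr ht
    have hc := d.conv_gap h hp (x := z + y + t) (e := y + e) (ρ := ρ) hm hγ hρ hγ₁p.le hn (by
      intro y' hy'
      obtain ⟨h1, h2⟩ := he (y' - y) ⟨by linarith [hy'.1], by linarith [hy'.2]⟩
      constructor
      · have := hy _ h1
        simpa using this
      · have := hgap _ h2
        have e1 : z + (t - (y' - y)) = z + y + t - y' := by ring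
        rwa [e1] at this)
    have hc' : conv (qshift S.q ℓ) (v n) (z + y + t)
        ≤ conv (qshift S.q ℓ) φ (z + y + t + ξ) - γ₁ := by
      rw [hγ₁] at hc ⊢; linarith
    rw [d.step]
    have h1 := S.g_mono hc'
    have h2 := hmin (show z + y + t ∈ Set.Icc (-B) B by
      rw [abs_le] at hzy ht
      constructor <;> simp only [hB] <;> linarith [hzy.1, hzy.2, ht.1, ht.2])
    simp only [Set.mem_ofPred_eq] at h2
    linarith
  rw [abs_le] at hz
  rcases le_total 0 z with h0 | h0
  · exact main y₁ hs₁ (by rw [abs_le]; constructor <;> linarith)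
  · exact main y₂ hs₂ (by rw [abs_le]; constructor <;> linarith)

lemma spread_many (d : Dyn S ℓ v) (h : IsTravelingWave S ℓ φ) (hp : Ker (qshift S.q ℓ) K)
    {ξ : ℝ} (hξ : ξ ∈ barr φ v) {y₁ y₂ s m M : ℝ} (hy₁ : y₁ < 0) (hy₂ : 0 < y₂)
    (hs : 0 < s) (hm : 0 < m) (hs₁ : ∀ t, |t| ≤ s → m ≤ qshift S.q ℓ (y₁ + t))
    (hs₂ : ∀ t, |t| ≤ s → m ≤ qshift S.q ℓ (y₂ + t)) (hM₁ : -y₁ ≤ M) (hM₂ : y₂ ≤ M)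
    {r γ : ℝ} (hr : 0 < r) (hγ : 0 < γ) (k : ℕ) :
    ∃ γ' > 0, ∀ᶠ n in atTop, ∀ z, |z| ≤ M → (∀ t, |t| ≤ r → v n (z + t) ≤ φ (z + t + ξ) - γ) →
      ∃ z', |z'| ≤ M ∧ ∀ t, |t| ≤ r + k * (s / 2) →
        v (n + k) (z' + t) ≤ φ (z' + t + ξ) - γ' := by
  induction k with
  | zero =>
    refine ⟨γ, hγ, Eventually.of_forall fun n z hz hgap => ⟨z, hz, fun t ht => ?_⟩⟩
    exact hgap t (by simpa using ht)
  | succ k ih =>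
    obtain ⟨γ₁, hγ₁, h1⟩ := ih
    obtain ⟨γ₂, hγ₂, h2⟩ := d.spread_one h hp hξ hy₁ hy₂ hs hm hs₁ hs₂ hM₁ hM₂
      (show 0 < r + k * (s / 2) by positivity) hγ₁
    refine ⟨γ₂, hγ₂, ?_⟩
    filter_upwards [h1, (tendsto_add_atTop_nat k).eventually h2] with n a1 a2 z hz hgap
    obtain ⟨z', hz', hgap'⟩ := a1 z hz hgap
    obtain ⟨z'', hz'', hgap''⟩ := a2 z' hz' hgap'
    refine ⟨z'', hz'', fun t ht => hgap'' t (ht.trans (le_of_eq ?_))⟩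
    push_cast; ring

/-- The lower estimate on compact sets. -/
lemma lower_compact (d : Dyn S ℓ v) (h : IsTravelingWave S ℓ φ) (hp : Ker (qshift S.q ℓ) K)
    {R γ : ℝ} (hR : 0 < R) (hγ : 0 < γ) :
    ∀ᶠ n in atTop, ∀ x, |x| ≤ R → φ (x + sInf (barr φ v)) - γ ≤ v n x := by
  have hξ := d.barr_sInf h hp
  set ξ := sInf (barr φ v) with hξdef
  obtain ⟨β, τ, ε₀, hβ0, hβ1, hτ, hε₀, hst⟩ := h.stability hp
  obtain ⟨D, hD, hlip⟩ := h.lip hp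
  obtain ⟨y₁, hy₁, h₁⟩ := h.exists_neg hp
  obtain ⟨y₂, hy₂, h₂⟩ := h.exists_pos hp
  obtain ⟨s, m, hs, hm, hs₁, hs₂⟩ := exists_spread hp h₁ h₂
  set σ := τ / (1 - β) with hσ
  have hσp : 0 < σ := div_pos hτ (by linarith)
  set κ := 1 / (4 * σ) with hκ
  have hκp : 0 < κ := by positivity
  obtain ⟨R₁, hR₁, htail⟩ := h.tail_slope hp hκp
  set r := γ / (4 * D) with hr
  have hrp : 0 < r := by positivity
  set M := R + r + -y₁ + y₂ with hM
  obtain ⟨k, hk⟩ := exists_nat_ge ((M + R₁ + |ξ|) / (s / 2))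
  rw [div_le_iff₀ (by positivity)] at hk
  obtain ⟨γ', hγ', hspread⟩ := d.spread_many h hp hξ hy₁ hy₂ hs hm hs₁ hs₂ (M := M)
    (by linarith) (by linarith) hrp (show 0 < γ / 2 by linarith) k
  set δ := min (γ' / D) (min (ε₀ / (2 * κ)) 1) with hδ
  have hδp : 0 < δ := by positivity
  have hδ1 : δ ≤ γ' / D := min_le_left _ _
  have hδ2 : δ ≤ ε₀ / (2 * κ) := (min_le_right _ _).trans (min_le_left _ _)
  have hδ3 : δ ≤ 1 := (min_le_right _ _).trans (min_le_right _ _)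
  filter_upwards [hspread, (tendsto_add_atTop_nat k).eventually (hξ (κ * δ) (by positivity))]
    with n a1 a2 x hx
  by_contra hcon
  push Not at hcon
  rw [abs_le] at hx
  obtain ⟨z', hz', hz⟩ := a1 (x - r) (by rw [abs_le]; constructor <;> linarith [hx.1, hx.2]) (by
    intro t ht
    rw [abs_le] at ht
    have b1 := d.mono n (show x - r + t ≤ x by linarith)
    have b2 := hlip (x - r + t + ξ) (x + ξ) (by linarith)
    have b3 : D * (x + ξ - (x - r + t + ξ)) ≤ D * (2 * r) :=
      mul_le_mul_of_nonneg_left (by linarith) hD.le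
    have b4 : D * (2 * r) = γ / 2 := by rw [hr]; field_simp; norm_num
    linarith)
  have hall : ∀ y, v (n + k) y ≤ φ (y + (ξ - δ)) + 2 * κ * δ := by
    intro y
    have e1 : y + (ξ - δ) = y + ξ - δ := by ring
    rw [e1]
    have hkd : 0 < κ * δ := by positivity
    rcases le_total R₁ |y + ξ| with c | c
    · have b1 := htail _ c δ hδp.le hδ3
      have b2 := a2 y
      linarith
    · have b1 := hz (y - z') (by
        have := abs_sub y z'
        have h3 : |y| ≤ |y + ξ| + |ξ| := by
          have := abs_sub (y + ξ) ξ
          simpa using this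
        linarith)
      have e2 : z' + (y - z') = y := by ring
      rw [e2] at b1
      have b2 := hlip (y + ξ - δ) (y + ξ) (by linarith)
      have b3 : D * (y + ξ - (y + ξ - δ)) ≤ D * (γ' / D) :=
        mul_le_mul_of_nonneg_left (by linarith) hD.le
      have b4 : D * (γ' / D) = γ' := by field_simp
      linarith
  have hmem := d.barr_intro h hp hβ0 hβ1 hτ (fun ε h1 h2 x => (hst ε h1 h2 x).1)
    (ε := 2 * κ * δ) (by positivity) (by
      calc 2 * κ * δ ≤ 2 * κ * (ε₀ / (2 * κ)) := mul_le_mul_of_nonneg_left hδ2 (by positivity)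
        _ = ε₀ := by field_simp) hall
  have hle := csInf_le (d.barr_bdd h hp) hmem
  rw [← hξdef, ← hσ] at hle
  have : σ * (2 * κ * δ) = δ / 2 := by rw [hκ]; field_simp; norm_num
  linarith

lemma converge (d : Dyn S ℓ v) (h : IsTravelingWave S ℓ φ) (hp : Ker (qshift S.q ℓ) K) :
    ∃ ξ, ∀ ε > 0, ∀ᶠ n in atTop, ∀ x, |v n x - φ (x + ξ)| ≤ ε := by
  refine ⟨sInf (barr φ v), fun ε hε => ?_⟩
  have hξ := d.barr_sInf h hp
  set ξ := sInf (barr φ v) with hξdef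
  obtain ⟨a, ha⟩ := (h.limit_bot.eventually_lt_const hε).exists_forall_of_atBot
  obtain ⟨b, hb⟩ := (h.limit_top.eventually_const_lt
    (show 1 - ε / 2 < 1 by linarith)).exists_forall_of_atTop
  set R := |a| + |b| + |ξ| + 1 with hR
  have hRp : 0 < R := by positivity
  filter_upwards [hξ ε hε, d.lower_compact h hp hRp (show 0 < ε / 2 by linarith)] with n h1 h2 x
  rw [← hξdef] at h2
  rw [abs_le]
  refine ⟨?_, by linarith [h1 x]⟩
  have hξ1 := le_abs_self ξ
  have hξ2 := neg_abs_le ξ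
  rcases le_total |x| R with c | c
  · linarith [h2 x c]
  · rcases le_total 0 x with c0 | c0
    · rw [abs_of_nonneg c0] at c
      have b1 := d.mono n c
      have b2 := h2 R (by rw [abs_of_pos hRp])
      have b3 := hb (R + ξ) (by linarith [le_abs_self b, abs_nonneg a])
      linarith [h.le_one (x + ξ)]
    · rw [abs_of_nonpos c0] at c
      have b3 := ha (x + ξ) (by linarith [neg_abs_le a, abs_nonneg b])
      linarith [d.nonneg n x]

end Dyn

lemma dyn_of_rec (S : BistableSetting) (ℓ : ℝ) (u : ℕ → ℝ → ℝ)
    (h0 : ∀ x : ℝ, u 0 x = if 0 ≤ x then 1 else 0)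
    (hrec : ∀ (n : ℕ) (x : ℝ), u (n + 1) x = S.g (conv S.q (u n) x)) :
    Dyn S ℓ (fun n x => u n (x + n * ℓ)) := by
  obtain ⟨K, hp⟩ := exists_ker S ℓ
  have hstep : ∀ (n : ℕ) (x : ℝ), u (n + 1) (x + (n + 1 : ℕ) * ℓ)
      = S.g (conv (qshift S.q ℓ) (fun x => u n (x + n * ℓ)) x) := by
    intro n x
    rw [hrec]
    congr 1
    unfold conv qshift
    rw [← integral_add_right_eq_self _ ℓ]
    congr 1
    ext y
    congr 2
    push_cast
    ring
  have hind : ∀ n : ℕ, Monotone (fun x => u n (x + n * ℓ)) ∧ ∀ x, 0 ≤ u n (x + n * ℓ) ∧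
      u n (x + n * ℓ) ≤ 1 := by
    intro n
    induction n with
    | zero =>
      constructor
      · intro x y hxy
        simp only [h0]
        split_ifs with c1 c2 <;> norm_num
        linarith
      · intro x
        rw [h0]
        split_ifs <;> norm_num
    | succ n ih =>
      obtain ⟨hm, hb⟩ := ih
      have hintg : ∀ x, Integrable
          (fun y => qshift S.q ℓ y * (fun x => u n (x + n * ℓ)) (x - y)) := by
        intro x
        exact hp.integrable_mul (w := fun x => u n (x + n * ℓ)) hm.measurable (C := 1)
          (fun x => by rw [abs_of_nonneg (hb x).1]; exact (hb x).2) x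
      constructor
      · intro x y hxy
        simp only
        rw [hstep, hstep]
        apply S.g_mono
        apply integral_mono (hintg x) (hintg y)
        intro z
        exact mul_le_mul_of_nonneg_left (hm (by linarith)) (hp.nonneg z)
      · intro x
        rw [hstep]
        constructor
        · rw [← S.g_zero]
          exact S.g_mono (hp.le_conv (hintg x) fun y _ => (hb _).1)
        · rw [← S.g_one]
          exact S.g_mono (hp.conv_le (hintg x) fun y _ => (hb _).2)
  exact ⟨fun n => (hind n).1, fun n x => ((hind n).2 x).1, fun n x => ((hind n).2 x).2,
    hstep, fun x => by simp [h0]⟩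

/-- Convergence to the traveling wave: for the bistable recursion started from a step
initial condition there is `x₀ ∈ ℝ` such that `sup_x |u_n(x) - φ(x - nℓ - x₀)| → 0`;
consequently the medians satisfy `med_n = nℓ + x₀ + o(1)`. -/
theorem bistable_recursion_convergence (S : BistableSetting) (ℓ : ℝ) (φ : ℝ → ℝ)
    (h : IsTravelingWave S ℓ φ) (hnorm : φ 0 = 1 / 2) (u : ℕ → ℝ → ℝ)
    (h0 : ∀ x : ℝ, u 0 x = if 0 ≤ x then 1 else 0)
    (hrec : ∀ (n : ℕ) (x : ℝ), u (n + 1) x = S.g (conv S.q (u n) x)) :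
    ∃ x₀ : ℝ,
      Tendsto (fun n : ℕ => ⨆ x : ℝ, |u n x - φ (x - n * ℓ - x₀)|) atTop (𝓝 0) ∧
      Tendsto (fun n : ℕ => sInf {x : ℝ | 1 / 2 ≤ u n x} - (n * ℓ + x₀)) atTop (𝓝 0) := by
  obtain ⟨K, hp⟩ := exists_ker S ℓ
  obtain ⟨ξ, hξ⟩ := (dyn_of_rec S ℓ u h0 hrec).converge h hp
  have key : ∀ ε > 0, ∀ᶠ n : ℕ in atTop, ∀ x : ℝ, |u n x - φ (x - n * ℓ - (-ξ))| ≤ ε := by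
    intro ε hε
    filter_upwards [hξ ε hε] with n hn x
    have := hn (x - n * ℓ)
    rw [sub_add_cancel] at this
    rwa [sub_neg_eq_add]
  refine ⟨-ξ, ?_, ?_⟩
  · rw [Metric.tendsto_nhds]
    intro ε hε
    filter_upwards [key (ε / 2) (by linarith)] with n hn
    have h1 : (⨆ x : ℝ, |u n x - φ (x - n * ℓ - (-ξ))|) ≤ ε / 2 := ciSup_le hn
    have h2 : 0 ≤ (⨆ x : ℝ, |u n x - φ (x - n * ℓ - (-ξ))|) :=
      Real.iSup_nonneg fun x => abs_nonneg _
    rw [Real.dist_eq, sub_zero, abs_of_nonneg h2]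
    linarith
  · rw [Metric.tendsto_nhds]
    intro ε hε
    have hs := h.strictMono hp
    have g1 : φ 0 < φ (ε / 2) := hs (by linarith)
    have g2 : φ (-(ε / 2)) < φ 0 := hs (by linarith)
    rw [hnorm] at g1 g2
    set γ := min (φ (ε / 2) - 1 / 2) ((1 / 2 - φ (-(ε / 2))) / 2) with hγ
    have hγp : 0 < γ := lt_min (by linarith) (by linarith)
    have hγ1 : γ ≤ φ (ε / 2) - 1 / 2 := min_le_left _ _
    have hγ2 : γ ≤ (1 / 2 - φ (-(ε / 2))) / 2 := min_le_right _ _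
    filter_upwards [key γ hγp] with n hn
    have hmem : (n * ℓ + -ξ + ε / 2) ∈ {x : ℝ | 1 / 2 ≤ u n x} := by
      have b := (abs_le.1 (hn (n * ℓ + -ξ + ε / 2))).1
      rw [show (n * ℓ + -ξ + ε / 2) - n * ℓ - (-ξ) = ε / 2 by ring] at b
      show 1 / 2 ≤ u n _
      linarith
    have hlow : ∀ x ∈ {x : ℝ | 1 / 2 ≤ u n x}, n * ℓ + -ξ - ε / 2 ≤ x := by
      intro x hx
      by_contra hcon
      push Not at hcon
      have b := (abs_le.1 (hn x)).2
      have b2 := h.mono (show x - n * ℓ - (-ξ) ≤ -(ε / 2) by linarith)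
      have b3 : 1 / 2 ≤ u n x := hx
      linarith
    have c1 := csInf_le ⟨_, hlow⟩ hmem
    have c2 := le_csInf ⟨_, hmem⟩ hlow
    rw [Real.dist_eq, sub_zero, abs_lt]
    constructor <;> linarith
end

section
/- Let φ be a traveling wave with speed ℓ. There exists δ_0 > 0 with the following property: if ξ_0^−, ξ_0^+ ∈ ℝ, 0 ≤ β_0 ≤ δ_0, and (u_n)_{n≥0} is a sequence of bounded measurable functions satisfying u_{n+1}(x) = g((q_ℓ * u_n)(x)) for all n ≥ 0 and x ∈ ℝ, with φ(x + ξ_0^−) − β_0 ≤ u_0(x) ≤ φ(x + ξ_0^+) + β_0 for all x ∈ ℝ, then there exist ξ̄ ∈ ℝ and a strictly increasing sequence of integers n_k → ∞ such that sup_{x∈ℝ} |u_{n_k}(x) − φ(x + ξ̄)| → 0 as k → ∞; that is, the ω-limit set of the orbit (u_n) contains a shift of the traveling wave. -/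
open MeasureTheory Filter Topology

namespace OLW

/-- Standing assumptions on the (shifted) kernel. -/
structure Kern (k : ℝ → ℝ) : Prop where
  cont : Continuous k
  supp : HasCompactSupport k
  nonneg : ∀ x, 0 ≤ k x
  int : ∫ x, k x = 1

/-- Standing assumptions on the nonlinearity. -/
structure NL (g g' : ℝ → ℝ) (μ ρ K : ℝ) : Prop where
  der : ∀ x, HasDerivAt g (g' x) x
  nonneg : ∀ x, 0 ≤ g' x
  pos : ∀ x ∈ Set.Ioo (0:ℝ) 1, 0 < g' x
  bd : ∀ x, g' x ≤ K
  lo : ∀ x, x ≤ ρ → g' x ≤ μ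
  hi : ∀ x, 1 - ρ ≤ x → g' x ≤ μ
  g0 : g 0 = 0
  g1 : g 1 = 1
  hμ0 : 0 < μ
  hμ1 : μ < 1
  hρ : 0 < ρ
  hρ1 : ρ < 1
  hK : 0 < K

/-- Traveling wave equation. -/
structure Wave (g k φ : ℝ → ℝ) : Prop where
  mono : Monotone φ
  smooth : ContDiff ℝ 1 φ
  eq : ∀ x, φ x = g (conv k φ x)
  bot : Tendsto φ atBot (𝓝 0)
  top : Tendsto φ atTop (𝓝 1)


theorem Kern.integrable {k : ℝ → ℝ} (hk : Kern k) {u : ℝ → ℝ} (hu : Measurable u) {C : ℝ}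
    (hC : ∀ x, |u x| ≤ C) (x : ℝ) : Integrable (fun y => k y * u (x - y)) := by
  refine (hk.cont.integrable_of_hasCompactSupport hk.supp).mul_bdd (c := C) ?_ ?_
  · exact (hu.comp (measurable_const.sub measurable_id)).aestronglyMeasurable
  · exact Eventually.of_forall fun y => by simpa using hC (x - y)

theorem Kern.conv_mono {k : ℝ → ℝ} (hk : Kern k) {u v : ℝ → ℝ} (hu : Measurable u)
    (hv : Measurable v) {C D : ℝ}
    (hC : ∀ x, |u x| ≤ C) (hD : ∀ x, |v x| ≤ D) (h : ∀ x, u x ≤ v x) (x : ℝ) :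
    conv k u x ≤ conv k v x :=
  integral_mono (hk.integrable hu hC x) (hk.integrable hv hD x)
    fun y => mul_le_mul_of_nonneg_left (h _) (hk.nonneg y)

theorem Kern.conv_add_const {k : ℝ → ℝ} (hk : Kern k) {u : ℝ → ℝ} (hu : Measurable u) {C : ℝ}
    (hC : ∀ x, |u x| ≤ C) (c x : ℝ) : conv k (fun y => u y + c) x = conv k u x + c := by
  unfold conv
  simp only [mul_add]
  rw [integral_add (hk.integrable hu hC x)
    ((hk.cont.integrable_of_hasCompactSupport hk.supp).mul_const c), integral_mul_const, hk.int,
    one_mul]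

theorem Kern.conv_const {k : ℝ → ℝ} (hk : Kern k) (c x : ℝ) : conv k (fun _ => c) x = c := by
  unfold conv
  rw [integral_mul_const, hk.int, one_mul]

theorem conv_shift (k u : ℝ → ℝ) (b x : ℝ) :
    conv k (fun y => u (y + b)) x = conv k u (x + b) := by
  unfold conv
  congr 1; ext y
  dsimp only
  rw [show x - y + b = x + b - y by ring]

theorem Kern.conv_sub {k : ℝ → ℝ} (hk : Kern k) {u v : ℝ → ℝ} (hu : Measurable u)
    (hv : Measurable v) {C D : ℝ}
    (hC : ∀ x, |u x| ≤ C) (hD : ∀ x, |v x| ≤ D) (x : ℝ) :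
    conv k (fun y => u y - v y) x = conv k u x - conv k v x := by
  unfold conv
  simp only [mul_sub]
  exact integral_sub (hk.integrable hu hC x) (hk.integrable hv hD x)

theorem Kern.conv_dist {k : ℝ → ℝ} (hk : Kern k) {u v : ℝ → ℝ} (hu : Measurable u)
    (hv : Measurable v) {C D ε : ℝ}
    (hC : ∀ x, |u x| ≤ C) (hD : ∀ x, |v x| ≤ D) (h : ∀ x, |u x - v x| ≤ ε) (x : ℝ) :
    |conv k u x - conv k v x| ≤ ε := by
  have e : ∀ w : ℝ → ℝ, ∀ E, (∀ x, |w x| ≤ E) → ∀ x, |w x + ε| ≤ E + |ε| :=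
    fun w E hE x => (abs_add_le _ _).trans (by linarith [hE x])
  have h1 := hk.conv_mono hu (hv.add_const ε) hC (e v D hD)
    (fun y => by have := abs_le.1 (h y); linarith) x
  have h2 := hk.conv_mono hv (hu.add_const ε) hD (e u C hC)
    (fun y => by have := abs_le.1 (h y); linarith) x
  rw [hk.conv_add_const hv hD] at h1
  rw [hk.conv_add_const hu hC] at h2
  rw [abs_le]; constructor <;> linarith

theorem Kern.conv_pos {k : ℝ → ℝ} (hk : Kern k) {u : ℝ → ℝ} (hu : Continuous u)
    (h0 : ∀ x, 0 ≤ u x) {x s : ℝ} (hs : 0 < k s) (hx : 0 < u (x - s)) : 0 < conv k u x := by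
  unfold conv
  refine Continuous.integral_pos_of_hasCompactSupport_nonneg_nonzero (x := s) ?_ ?_ ?_ ?_
  · exact hk.cont.mul (hu.comp (continuous_const.sub continuous_id))
  · exact hk.supp.mul_right
  · exact fun y => mul_nonneg (hk.nonneg y) (h0 _)
  · exact (mul_pos hs hx).ne'

theorem Kern.exists_R {k : ℝ → ℝ} (hk : Kern k) : ∃ R > 0, ∀ y, R < |y| → k y = 0 := by
  obtain ⟨R, hR, h⟩ := hk.supp.isCompact.isBounded.exists_pos_norm_le
  refine ⟨R, hR, fun y hy => ?_⟩
  by_contra hne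
  have := h y (subset_tsupport _ hne)
  rw [Real.norm_eq_abs] at this
  linarith

theorem Kern.equicont {k : ℝ → ℝ} (hk : Kern k) {C ε : ℝ} (hC0 : 0 < C) (hε : 0 < ε) :
    ∃ δ > 0, ∀ u : ℝ → ℝ, Measurable u → (∀ x, |u x| ≤ C) →
      ∀ x x', |x - x'| < δ → |conv k u x - conv k u x'| ≤ ε := by
  obtain ⟨R, hR, hR'⟩ := hk.exists_R
  have huc : UniformContinuous k := hk.supp.uniformContinuous_of_continuous hk.cont
  obtain ⟨δ, hδ, hd⟩ := Metric.uniformContinuous_iff.1 huc (ε / (C * (2 * R + 2))) (by positivity)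
  refine ⟨min δ 1, by positivity, fun u hu hC x x' hx => ?_⟩
  have hx1 := lt_of_lt_of_le hx (min_le_left _ _)
  have hx2 := lt_of_lt_of_le hx (min_le_right _ _)
  have key : ∀ z, conv k u z = ∫ y, k (z - y) * u y := by
    intro z
    unfold conv
    rw [← integral_sub_left_eq_self _ _ z]
    simp
  have hkInt : ∀ z, Integrable (fun y => k (z - y) * u y) := by
    intro z
    have := (hk.integrable hu hC z).comp_sub_left z
    simpa using this
  rw [key, key, ← integral_sub (hkInt x) (hkInt x')]
  have hb := norm_integral_le_of_norm_le (μ := volume)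
    (f := fun y => k (x - y) * u y - k (x' - y) * u y)
    (g := (Set.Icc (x - R - 1) (x + R + 1)).indicator fun _ => ε / (C * (2 * R + 2)) * C) ?_ ?_
  · rw [integral_indicator measurableSet_Icc, setIntegral_const] at hb
    simp only [Real.norm_eq_abs, Measure.real, Real.volume_Icc, smul_eq_mul] at hb
    refine hb.trans (le_of_eq ?_)
    rw [ENNReal.toReal_ofReal (by linarith)]
    rw [show x + R + 1 - (x - R - 1) = 2 * R + 2 by ring]
    field_simp
  · refine (integrable_indicator_iff measurableSet_Icc).2 ?_
    exact integrableOn_const (by simp)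
  · refine Eventually.of_forall fun y => ?_
    by_cases hy : y ∈ Set.Icc (x - R - 1) (x + R + 1)
    · rw [Set.indicator_of_mem hy, ← sub_mul, Real.norm_eq_abs, abs_mul]
      have h1 : dist (x - y) (x' - y) < δ := by
        rw [Real.dist_eq]; simpa using hx1
      have h2 := (hd h1).le
      rw [Real.dist_eq] at h2
      exact mul_le_mul h2 (hC y) (abs_nonneg _) (by positivity)
    · rw [Set.indicator_of_notMem hy]
      have h3 : R + 1 < |x - y| := by
        rw [Set.mem_Icc, not_and_or] at hy
        rcases hy with hy | hy
        · exact lt_of_lt_of_le (by linarith) (le_abs_self _)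
        · exact lt_of_lt_of_le (by linarith) (neg_le_abs _)
      have h4 : R < |x' - y| := by
        have := abs_sub_abs_le_abs_sub (x - y) (x' - y)
        have e : x - y - (x' - y) = x - x' := by ring
        rw [e] at this
        linarith
      rw [hR' _ (by linarith), hR' _ h4]
      simp

/-- Propagation of positivity sets. -/
theorem propagate {k : ℝ → ℝ} (hc : Continuous k) {p r : ℝ} (hp : 0 < p) (hr : 0 < r)
    (hkp : 0 < k p) (hkr : 0 < k (-r)) (U : ℕ → Set ℝ)
    (hU : ∀ n y s, y ∈ U n → 0 < k s → y + s ∈ U (n + 1)) {x₀ : ℝ} (h0 : x₀ ∈ U 0) (M : ℝ) :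
    ∃ n, ∀ x, |x| ≤ M → x ∈ U n := by
  obtain ⟨η, hη, h1, h2⟩ : ∃ η > 0, (∀ s, |s - p| < η → 0 < k s) ∧
      (∀ s, |s + r| < η → 0 < k s) := by
    obtain ⟨a, ha, h1⟩ := Metric.eventually_nhds_iff.1 (hc.continuousAt.eventually (lt_mem_nhds hkp))
    obtain ⟨b, hb, h2⟩ := Metric.eventually_nhds_iff.1 (hc.continuousAt.eventually (lt_mem_nhds hkr))
    refine ⟨min a b, lt_min ha hb, fun s hs => h1 ?_, fun s hs => h2 ?_⟩
    · rw [Real.dist_eq]; exact lt_of_lt_of_le hs (min_le_left _ _)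
    · rw [Real.dist_eq, sub_neg_eq_add]; exact lt_of_lt_of_le hs (min_le_right _ _)
  have A : ∀ s t, 0 < k s → 0 < k t → ∀ i j : ℕ, x₀ + i * s + j * t ∈ U (i + j) := by
    intro s t hs ht i j
    induction j with
    | zero =>
      induction i with
      | zero => simpa using h0
      | succ i ih =>
        have := hU _ _ _ ih hs
        have e : x₀ + ((i + 1 : ℕ) : ℝ) * s + ((0 : ℕ) : ℝ) * t
            = x₀ + i * s + ((0 : ℕ) : ℝ) * t + s := by push_cast; ring
        rw [e]
        exact this
    | succ j ih =>
      have := hU _ _ _ ih ht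
      have e : x₀ + i * s + ((j + 1 : ℕ) : ℝ) * t = x₀ + i * s + j * t + t := by push_cast; ring
      rw [e]
      exact this
  obtain ⟨n, hn⟩ := exists_nat_gt (max ((p + r) / η) ((M + |x₀|) / p + (M + |x₀|) / r + 1))
  have hn1 : (p + r) / η < n := lt_of_le_of_lt (le_max_left _ _) hn
  have hn2 : (M + |x₀|) / p + (M + |x₀|) / r + 1 < n := lt_of_le_of_lt (le_max_right _ _) hn
  refine ⟨n, fun x hx => ?_⟩
  have hM : 0 ≤ M := (abs_nonneg x).trans hx
  have hz : |x - x₀| ≤ M + |x₀| := (abs_sub _ _).trans (by linarith)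
  obtain ⟨hz1, hz2⟩ := abs_le.1 hz
  have q1 : 0 ≤ (M + |x₀|) / p := by positivity
  have q2 : 0 ≤ (M + |x₀|) / r := by positivity
  have hnpos : (0:ℝ) < n := by linarith
  have b1 : M + |x₀| ≤ n * p := by
    rw [← div_le_iff₀ hp]; linarith
  have b2 : M + |x₀| ≤ n * r := by
    rw [← div_le_iff₀ hr]; linarith
  -- choose the number of forward jumps
  set τ := (x - x₀ + n * r) / (p + r) with hτ
  have hτ0 : 0 ≤ τ := by apply div_nonneg <;> linarith
  have hτn : τ ≤ n := by rw [hτ, div_le_iff₀ (by linarith)]; nlinarith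
  set i := ⌊τ⌋₊ with hi
  have hi1 : (i:ℝ) ≤ τ := Nat.floor_le hτ0
  have hi2 : τ < i + 1 := Nat.lt_floor_add_one τ
  have hin : i ≤ n := by exact_mod_cast hi1.trans hτn
  have heq : τ * (p + r) = x - x₀ + n * r := by rw [hτ]; field_simp
  set e := (τ - i) * (p + r) / n with he
  have he0 : 0 ≤ e := by
    apply div_nonneg _ hnpos.le
    apply mul_nonneg <;> linarith
  have he1 : e < η := by
    rw [he, div_lt_iff₀ hnpos]
    rw [div_lt_iff₀ hη] at hn1
    nlinarith
  have hen : e * n = (τ - i) * (p + r) := by rw [he]; field_simp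
  have := A (p + e) (-r + e) (h1 _ (by simpa [abs_of_nonneg he0] using he1))
    (h2 _ (by simpa [abs_of_nonneg he0] using he1)) i (n - i)
  rw [Nat.add_sub_cancel' hin] at this
  convert this using 1
  rw [Nat.cast_sub hin]
  linear_combination -heq - hen

end OLW

namespace OLW

section nl
variable {g g' : ℝ → ℝ} {μ ρ K : ℝ}

theorem NL.gmono (H : NL g g' μ ρ K) : Monotone g := by
  refine monotone_of_deriv_nonneg (fun x => (H.der x).differentiableAt) fun x => ?_
  rw [(H.der x).deriv]; exact H.nonneg x

theorem NL.gstrict (H : NL g g' μ ρ K) : StrictMonoOn g (Set.Icc 0 1) := by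
  refine strictMonoOn_of_deriv_pos (convex_Icc 0 1)
    (fun x _ => (H.der x).continuousAt.continuousWithinAt) fun x hx => ?_
  rw [interior_Icc] at hx
  rw [(H.der x).deriv]; exact H.pos x hx

theorem NL.aux (H : NL g g' μ ρ K) {D : Set ℝ} (hD : Convex ℝ D) {c : ℝ}
    (hc : ∀ x ∈ D, g' x ≤ c) {s t : ℝ} (hs : s ∈ D) (ht : t ∈ D) (hst : s ≤ t) :
    g t - g s ≤ c * (t - s) := by
  refine hD.image_sub_le_mul_sub_of_deriv_le
    (fun x _ => (H.der x).continuousAt.continuousWithinAt)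
    (fun x _ => (H.der x).differentiableAt.differentiableWithinAt) (fun x hx => ?_) s hs t ht hst
  rw [(H.der x).deriv]; exact hc x (interior_subset hx)

theorem NL.glip (H : NL g g' μ ρ K) {s t : ℝ} (hst : s ≤ t) : g t - g s ≤ K * (t - s) :=
  H.aux convex_univ (fun x _ => H.bd x) trivial trivial hst

theorem NL.glo (H : NL g g' μ ρ K) {s t : ℝ} (hst : s ≤ t) (ht : t ≤ ρ) :
    g t - g s ≤ μ * (t - s) :=
  H.aux (convex_Iic ρ) (fun x hx => H.lo x hx) (hst.trans ht) ht hst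

theorem NL.ghi (H : NL g g' μ ρ K) {s t : ℝ} (hst : s ≤ t) (hs : 1 - ρ ≤ s) :
    g t - g s ≤ μ * (t - s) :=
  H.aux (convex_Ici (1 - ρ)) (fun x hx => H.hi x hx) hs (hs.trans hst) hst

theorem NL.gdist (H : NL g g' μ ρ K) (s t : ℝ) : |g s - g t| ≤ K * |s - t| := by
  rcases le_total s t with h | h
  · rw [abs_sub_comm, abs_sub_comm s, abs_of_nonneg (sub_nonneg.2 (H.gmono h)),
      abs_of_nonneg (sub_nonneg.2 h)]
    exact H.glip h
  · rw [abs_of_nonneg (sub_nonneg.2 (H.gmono h)), abs_of_nonneg (sub_nonneg.2 h)]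
    exact H.glip h

end nl

theorem NL_of_setting (S : BistableSetting) : ∃ g' μ ρ K, NL S.g g' μ ρ K := by
  set Q := Polynomial.derivative S.P with hQ
  have hcont : Continuous fun x => Q.eval x := Q.continuous
  have hder : ∀ x, HasDerivAt (fun x => S.P.eval x) (Q.eval x) x := fun x => S.P.hasDerivAt x
  set G : ℝ → ℝ := fun x => Q.eval (max 0 (min 1 x)) with hG
  have hGc : Continuous G := hcont.comp (by fun_prop)
  have hQ0 : 0 ≤ Q.eval 0 := by
    have h1 : Tendsto (fun x => Q.eval x) (𝓝[>] 0) (𝓝 (Q.eval 0)) :=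
      hcont.continuousAt.tendsto.mono_left nhdsWithin_le_nhds
    refine ge_of_tendsto h1 ?_
    filter_upwards [Ioo_mem_nhdsGT (zero_lt_one' ℝ)] with x hx using (S.hP_mono x hx).le
  have hQ1 : 0 ≤ Q.eval 1 := by
    have h1 : Tendsto (fun x => Q.eval x) (𝓝[<] 1) (𝓝 (Q.eval 1)) :=
      hcont.continuousAt.tendsto.mono_left nhdsWithin_le_nhds
    refine ge_of_tendsto h1 ?_
    filter_upwards [Ioo_mem_nhdsLT (zero_lt_one' ℝ)] with x hx using (S.hP_mono x hx).le
  have hg1 : ∀ x, x ≤ 0 → S.g x = Q.eval 0 * x := by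
    intro x hx
    rcases hx.lt_or_eq with h | h
    · simp [BistableSetting.g, h, hQ]
    · subst h; simp [BistableSetting.g, S.hP0]
  have hg2 : ∀ x, 0 ≤ x → x ≤ 1 → S.g x = S.P.eval x := by
    intro x h0 h1
    simp [BistableSetting.g, not_lt.2 h0, h1]
  have hg3 : ∀ x, 1 ≤ x → S.g x = 1 + Q.eval 1 * (x - 1) := by
    intro x hx
    rcases hx.lt_or_eq with h | h
    · simp [BistableSetting.g, not_lt.2 (zero_le_one.trans hx), not_le.2 h, hQ]
    · subst h; simp [BistableSetting.g, S.hP1]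
  have hG1 : ∀ x, x ≤ 0 → G x = Q.eval 0 := by
    intro x hx; simp only [hG]; rw [min_eq_right (by linarith), max_eq_left hx]
  have hG2 : ∀ x, 0 ≤ x → x ≤ 1 → G x = Q.eval x := by
    intro x h0 h1; simp only [hG]; rw [min_eq_right h1, max_eq_right h0]
  have hG3 : ∀ x, 1 ≤ x → G x = Q.eval 1 := by
    intro x hx; simp only [hG]; rw [min_eq_left hx, max_eq_right zero_le_one]
  have d1 : ∀ x, x ≤ 0 → HasDerivWithinAt S.g (G x) (Set.Iic 0) x := by
    intro x hx
    rw [hG1 x hx]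
    have : HasDerivAt (fun y => Q.eval 0 * y) (Q.eval 0) x := by
      simpa using (hasDerivAt_id x).const_mul (Q.eval 0)
    exact this.hasDerivWithinAt.congr (fun y hy => hg1 y hy) (hg1 x hx)
  have d2 : ∀ x, 0 ≤ x → x ≤ 1 → HasDerivWithinAt S.g (G x) (Set.Icc 0 1) x := by
    intro x h0 h1
    rw [hG2 x h0 h1]
    exact (hder x).hasDerivWithinAt.congr (fun y hy => hg2 y hy.1 hy.2) (hg2 x h0 h1)
  have d3 : ∀ x, 1 ≤ x → HasDerivWithinAt S.g (G x) (Set.Ici 1) x := by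
    intro x hx
    rw [hG3 x hx]
    have : HasDerivAt (fun y => 1 + Q.eval 1 * (y - 1)) (Q.eval 1) x := by
      simpa using (((hasDerivAt_id x).sub_const 1).const_mul (Q.eval 1)).const_add 1
    exact this.hasDerivWithinAt.congr (fun y hy => hg3 y hy) (hg3 x hx)
  have hD : ∀ x, HasDerivAt S.g (G x) x := by
    intro x
    rcases lt_trichotomy x 0 with h | h | h
    · exact (d1 x h.le).hasDerivAt (Iic_mem_nhds h)
    · subst h
      refine ((d1 0 le_rfl).union (d2 0 le_rfl zero_le_one)).hasDerivAt ?_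
      filter_upwards [Iio_mem_nhds (zero_lt_one' ℝ)] with y hy
      rcases le_total y 0 with h | h
      · exact Or.inl h
      · exact Or.inr ⟨h, le_of_lt hy⟩
    · rcases lt_trichotomy x 1 with h' | h' | h'
      · exact (d2 x h.le h'.le).hasDerivAt (Icc_mem_nhds h h')
      · subst h'
        refine ((d2 1 zero_le_one le_rfl).union (d3 1 le_rfl)).hasDerivAt ?_
        filter_upwards [Ioi_mem_nhds (zero_lt_one' ℝ)] with y hy
        rcases le_total y 1 with h | h
        · exact Or.inl ⟨le_of_lt hy, h⟩
        · exact Or.inr h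
      · exact (d3 x h'.le).hasDerivAt (Ici_mem_nhds h')
  have hGnn : ∀ x, 0 ≤ G x := by
    intro x
    rcases le_or_gt x 0 with h | h
    · rw [hG1 x h]; exact hQ0
    · rcases lt_or_ge x 1 with h' | h'
      · rw [hG2 x h.le h'.le]; exact (S.hP_mono x ⟨h, h'⟩).le
      · rw [hG3 x h']; exact hQ1
  obtain ⟨K, hK⟩ : ∃ K, ∀ y ∈ Set.Icc (0:ℝ) 1, Q.eval y ≤ K := by
    obtain ⟨K, hK⟩ := (isCompact_Icc (a := (0:ℝ)) (b := 1)).bddAbove_image hcont.continuousOn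
    exact ⟨K, fun y hy => hK ⟨y, hy, rfl⟩⟩
  set μ := max ((Q.eval 0 + 1) / 2) ((Q.eval 1 + 1) / 2) with hμ
  have m0 : Q.eval 0 < μ := lt_of_lt_of_le (by have := S.hf'0; linarith) (le_max_left _ _)
  have m1 : Q.eval 1 < μ := lt_of_lt_of_le (by have := S.hf'1; linarith) (le_max_right _ _)
  obtain ⟨a, ha, h1⟩ := Metric.eventually_nhds_iff.1
    (hGc.continuousAt.eventually (gt_mem_nhds (show G 0 < μ by rwa [hG1 0 le_rfl])))
  obtain ⟨b, hb, h2⟩ := Metric.eventually_nhds_iff.1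
    (hGc.continuousAt.eventually (gt_mem_nhds (show G 1 < μ by rwa [hG3 1 le_rfl])))
  refine ⟨G, μ, min (min (a/2) (b/2)) (1/2), max K 1, hD, hGnn, ?_, ?_, ?_, ?_, ?_, ?_, ?_, ?_, ?_, ?_, ?_⟩
  · intro x hx; rw [hG2 x hx.1.le hx.2.le]; exact S.hP_mono x hx
  · intro x
    exact (hK _ ⟨le_max_left _ _, max_le zero_le_one (min_le_left _ _)⟩).trans (le_max_left _ _)
  · intro x hx
    rcases le_or_gt x 0 with h | h
    · rw [hG1 x h]; exact m0.le
    · refine (h1 ?_).le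
      have : x ≤ a / 2 := hx.trans ((min_le_left _ _).trans (min_le_left _ _))
      rw [Real.dist_eq, abs_lt]; constructor <;> linarith
  · intro x hx
    rcases le_or_gt 1 x with h | h
    · rw [hG3 x h]; exact m1.le
    · refine (h2 ?_).le
      have : min (min (a/2) (b/2)) (1/2) ≤ b / 2 := (min_le_left _ _).trans (min_le_right _ _)
      rw [Real.dist_eq, abs_lt]; constructor <;> linarith
  · rw [hg1 0 le_rfl]; simp
  · rw [hg3 1 le_rfl]; simp
  · linarith
  · have := S.hf'0; have := S.hf'1; rw [hμ, max_lt_iff]; constructor <;> linarith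
  · positivity
  · exact lt_of_le_of_lt (min_le_right _ _) (by norm_num)
  · positivity

theorem Kern_of_setting (S : BistableSetting) (ℓ : ℝ) : Kern (qshift S.q ℓ) where
  cont := S.hq_diff.continuous.comp (continuous_add_const ℓ)
  supp := S.hq_supp.comp_homeomorph (Homeomorph.addRight ℓ)
  nonneg x := S.hq_nonneg _
  int := by
    unfold qshift
    rw [integral_add_right_eq_self S.q ℓ]; exact S.hq_int

end OLW

namespace OLW

section wave
variable {g g' k φ : ℝ → ℝ} {μ ρ K : ℝ}

theorem Wave.cont (W : Wave g k φ) : Continuous φ := W.smooth.continuous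

theorem Wave.meas (W : Wave g k φ) : Measurable φ := W.cont.measurable

theorem Wave.nonneg (W : Wave g k φ) (x : ℝ) : 0 ≤ φ x := W.mono.le_of_tendsto W.bot x

theorem Wave.le_one (W : Wave g k φ) (x : ℝ) : φ x ≤ 1 := W.mono.ge_of_tendsto W.top x

theorem Wave.abs_le_one (W : Wave g k φ) (x : ℝ) : |φ x| ≤ 1 :=
  _root_.abs_le.2 ⟨by linarith [W.nonneg x], W.le_one x⟩

theorem Wave.A_nonneg (W : Wave g k φ) (hk : Kern k) (x : ℝ) : 0 ≤ conv k φ x :=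
  integral_nonneg fun y => mul_nonneg (hk.nonneg y) (W.nonneg _)

theorem Wave.A_le_one (W : Wave g k φ) (hk : Kern k) (x : ℝ) : conv k φ x ≤ 1 := by
  have := hk.conv_mono W.meas measurable_const W.abs_le_one (C := 1) (D := 1) (v := fun _ => 1)
    (by simp) W.le_one x
  rwa [hk.conv_const] at this

theorem Wave.A_le (W : Wave g k φ) (hk : Kern k) {x z : ℝ} (h : ∀ y, k y ≠ 0 → x - y ≤ z) :
    conv k φ x ≤ φ z := by
  rw [← hk.conv_const (φ z) x]
  refine integral_mono (hk.integrable W.meas W.abs_le_one x)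
    (hk.integrable (u := fun _ => φ z) measurable_const (fun _ => le_rfl) x) fun y => ?_
  by_cases hy : k y = 0
  · simp [hy]
  · exact mul_le_mul_of_nonneg_left (W.mono (h y hy)) (hk.nonneg y)

theorem Wave.le_A (W : Wave g k φ) (hk : Kern k) {x z : ℝ} (h : ∀ y, k y ≠ 0 → z ≤ x - y) :
    φ z ≤ conv k φ x := by
  rw [← hk.conv_const (φ z) x]
  refine integral_mono (hk.integrable (u := fun _ => φ z) measurable_const (fun _ => le_rfl) x)
    (hk.integrable W.meas W.abs_le_one x) fun y => ?_
  by_cases hy : k y = 0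
  · simp [hy]
  · exact mul_le_mul_of_nonneg_left (W.mono (h y hy)) (hk.nonneg y)

theorem Wave.exists_eq (W : Wave g k φ) {t : ℝ} (h0 : 0 < t) (h1 : t < 1) : ∃ x, φ x = t := by
  have a := (W.bot.eventually (gt_mem_nhds h0)).exists
  have b := (W.top.eventually (lt_mem_nhds h1)).exists
  obtain ⟨a, ha⟩ := a
  obtain ⟨b, hb⟩ := b
  exact mem_range_of_exists_le_of_exists_ge W.cont ⟨a, ha.le⟩ ⟨b, hb.le⟩

theorem Wave.exists_p (W : Wave g k φ) (hk : Kern k) (H : NL g g' μ ρ K) :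
    ∃ p, 0 < p ∧ 0 < k p := by
  by_contra! hcon
  have h0 : ∀ p, 0 < p → k p = 0 := fun p hp => le_antisymm (hcon p hp) (hk.nonneg p)
  have hρ := H.hρ
  have hρ1 := H.hρ1
  obtain ⟨x, hx⟩ := W.exists_eq (t := 1 - ρ / 2) (by linarith) (by linarith)
  have h1 : φ x ≤ conv k φ x := W.le_A hk fun y hy => by
    by_contra! hlt
    exact hy (h0 y (by linarith))
  have h2 := H.gmono h1
  rw [← W.eq, hx] at h2
  have h3 := H.ghi (s := 1 - ρ / 2) (t := 1) (by linarith) (by linarith)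
  rw [H.g1] at h3
  have := H.hμ1
  nlinarith

theorem Wave.exists_r (W : Wave g k φ) (hk : Kern k) (H : NL g g' μ ρ K) :
    ∃ r, 0 < r ∧ 0 < k (-r) := by
  by_contra! hcon
  have h0 : ∀ p, 0 < p → k (-p) = 0 := fun p hp => le_antisymm (hcon p hp) (hk.nonneg _)
  have hρ := H.hρ
  have hρ1 := H.hρ1
  obtain ⟨x, hx⟩ := W.exists_eq (t := ρ / 2) (by linarith) (by linarith)
  have h1 : conv k φ x ≤ φ x := W.A_le hk fun y hy => by
    by_contra! hlt
    exact hy (by simpa using h0 (-y) (by linarith))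
  have h2 := H.gmono h1
  rw [← W.eq, hx] at h2
  have h3 := H.glo (s := 0) (t := ρ / 2) (by linarith) (by linarith)
  rw [H.g0] at h3
  have := H.hμ1
  nlinarith

theorem Wave.spread (W : Wave g k φ) (hk : Kern k) (H : NL g g' μ ρ K) (U : ℕ → Set ℝ)
    (hU : ∀ n y s, y ∈ U n → 0 < k s → y + s ∈ U (n + 1)) {x₀ : ℝ} (h0 : x₀ ∈ U 0) (M : ℝ) :
    ∃ n, ∀ x, |x| ≤ M → x ∈ U n := by
  obtain ⟨p, hp, hkp⟩ := W.exists_p hk H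
  obtain ⟨r, hr, hkr⟩ := W.exists_r hk H
  exact propagate hk.cont hp hr hkp hkr U hU h0 M

theorem Wave.pos (W : Wave g k φ) (hk : Kern k) (H : NL g g' μ ρ K) (x : ℝ) : 0 < φ x := by
  obtain ⟨x₀, hx₀⟩ := W.exists_eq (t := 1 / 2) (by norm_num) (by norm_num)
  obtain ⟨n, hn⟩ := W.spread hk H (fun _ => {x | 0 < φ x}) (x₀ := x₀) (fun n y s hy hs => by
    have hA : 0 < conv k φ (y + s) := hk.conv_pos W.cont W.nonneg hs (by simpa using hy)
    have := H.gstrict ⟨le_rfl, zero_le_one⟩ ⟨hA.le, W.A_le_one hk _⟩ hA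
    rw [H.g0, ← W.eq] at this
    exact this) (by simp [hx₀]) |x|
  exact hn x le_rfl

theorem Wave.lt_one (W : Wave g k φ) (hk : Kern k) (H : NL g g' μ ρ K) (x : ℝ) : φ x < 1 := by
  obtain ⟨x₀, hx₀⟩ := W.exists_eq (t := 1 / 2) (by norm_num) (by norm_num)
  obtain ⟨n, hn⟩ := W.spread hk H (fun _ => {x | φ x < 1}) (x₀ := x₀) (fun n y s hy hs => by
    have hA : 0 < conv k (fun z => 1 - φ z) (y + s) :=
      hk.conv_pos (continuous_const.sub W.cont) (fun z => sub_nonneg.2 (W.le_one z)) hs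
        (by simpa using hy)
    rw [hk.conv_sub (u := fun _ => 1) measurable_const W.meas (C := 1) (by simp) W.abs_le_one,
      hk.conv_const] at hA
    have := H.gstrict ⟨W.A_nonneg hk _, W.A_le_one hk _⟩ ⟨zero_le_one, le_rfl⟩
      (show conv k φ (y + s) < 1 by linarith)
    rw [H.g1, ← W.eq] at this
    exact this) (by simp [hx₀]; norm_num) |x|
  exact hn x le_rfl

theorem Wave.A_mem (W : Wave g k φ) (hk : Kern k) (H : NL g g' μ ρ K) (x : ℝ) :
    conv k φ x ∈ Set.Ioo (0:ℝ) 1 := by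
  have h1 := W.pos hk H x
  have h2 := W.lt_one hk H x
  constructor
  · refine lt_of_le_of_ne (W.A_nonneg hk x) fun e => ?_
    rw [W.eq, ← e, H.g0] at h1
    exact lt_irrefl _ h1
  · refine lt_of_le_of_ne (W.A_le_one hk x) fun e => ?_
    rw [W.eq, e, H.g1] at h2
    exact lt_irrefl _ h2

theorem Wave.dcont (W : Wave g k φ) : Continuous (deriv φ) := W.smooth.continuous_deriv le_rfl

theorem Wave.dnonneg (W : Wave g k φ) (x : ℝ) : 0 ≤ deriv φ x := W.mono.deriv_nonneg

theorem Wave.hasDeriv (W : Wave g k φ) (x : ℝ) : HasDerivAt φ (deriv φ x) x :=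
  (W.smooth.differentiable one_ne_zero x).hasDerivAt

theorem Wave.A_deriv (W : Wave g k φ) (hk : Kern k) (x : ℝ) :
    HasDerivAt (conv k φ) (conv k (deriv φ) x) x := by
  obtain ⟨R, hR, hR'⟩ := hk.exists_R
  obtain ⟨D, hD⟩ := (isCompact_Icc (a := x - R - 1) (b := x + R + 1)).bddAbove_image
    W.dcont.continuousOn
  have hD' : ∀ y, x - R - 1 ≤ y → y ≤ x + R + 1 → deriv φ y ≤ D :=
    fun y h1 h2 => hD ⟨y, ⟨h1, h2⟩, rfl⟩
  have hki : Integrable k := hk.cont.integrable_of_hasCompactSupport hk.supp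
  refine (hasDerivAt_integral_of_dominated_loc_of_deriv_le (μ := volume)
    (F := fun x y => k y * φ (x - y)) (F' := fun x y => k y * deriv φ (x - y))
    (bound := fun y => k y * D) (s := Metric.ball x 1) (Metric.ball_mem_nhds x one_pos)
    ?_ ?_ ?_ ?_ ?_ ?_).2
  · exact Eventually.of_forall fun z => (hk.integrable W.meas W.abs_le_one z).aestronglyMeasurable
  · exact hk.integrable W.meas W.abs_le_one x
  · exact (hk.cont.mul (W.dcont.comp (continuous_const.sub continuous_id))).aestronglyMeasurable
  · refine Eventually.of_forall fun y z hz => ?_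
    rw [Metric.mem_ball, Real.dist_eq, abs_lt] at hz
    by_cases hy : R < |y|
    · simp [hR' y hy]
    · rw [not_lt, _root_.abs_le] at hy
      rw [Real.norm_eq_abs, abs_of_nonneg (mul_nonneg (hk.nonneg y) (W.dnonneg _))]
      exact mul_le_mul_of_nonneg_left (hD' _ (by linarith) (by linarith)) (hk.nonneg y)
  · exact hki.mul_const D
  · refine Eventually.of_forall fun y z _ => ?_
    have := (W.hasDeriv (z - y)).comp z ((hasDerivAt_id z).sub_const y)
    simpa using this.const_mul (k y)

theorem Wave.deriv_eq (W : Wave g k φ) (hk : Kern k) (H : NL g g' μ ρ K) (x : ℝ) :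
    deriv φ x = g' (conv k φ x) * conv k (deriv φ) x := by
  have h1 := (H.der (conv k φ x)).comp x (W.A_deriv hk x)
  have h2 : g ∘ conv k φ = φ := funext fun y => (W.eq y).symm
  rw [h2] at h1
  exact h1.deriv

theorem Wave.deriv_pos (W : Wave g k φ) (hk : Kern k) (H : NL g g' μ ρ K) (x : ℝ) :
    0 < deriv φ x := by
  have hex : ∃ x₀, 0 < deriv φ x₀ := by
    by_contra! hcon
    have h0 : ∀ x, deriv φ x = 0 := fun x => le_antisymm (hcon x) (W.dnonneg x)
    obtain ⟨a, ha⟩ := W.exists_eq (t := 1 / 2) (by norm_num) (by norm_num)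
    obtain ⟨b, hb⟩ := W.exists_eq (t := 1 / 3) (by norm_num) (by norm_num)
    have := is_const_of_deriv_eq_zero (W.smooth.differentiable one_ne_zero) h0 a b
    rw [ha, hb] at this
    norm_num at this
  obtain ⟨x₀, hx₀⟩ := hex
  obtain ⟨n, hn⟩ := W.spread hk H (fun _ => {x | 0 < deriv φ x}) (x₀ := x₀)
    (fun n y s hy hs => by
    have hA : 0 < conv k (deriv φ) (y + s) :=
      hk.conv_pos W.dcont W.dnonneg hs (by simpa using hy)
    show 0 < deriv φ (y + s)
    rw [W.deriv_eq hk H]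
    exact mul_pos (H.pos _ (W.A_mem hk H _)) hA) hx₀ |x|
  exact hn x le_rfl

theorem Wave.strictMono (W : Wave g k φ) (hk : Kern k) (H : NL g g' μ ρ K) : StrictMono φ :=
  strictMono_of_deriv_pos (W.deriv_pos hk H)

theorem Wave.deriv_le (W : Wave g k φ) (hk : Kern k) (H : NL g g' μ ρ K) :
    ∃ R C, 0 < C ∧ ∀ x, deriv φ x ≤ C * (φ (x + R) - φ (x - R)) := by
  obtain ⟨R, hR, hR'⟩ := hk.exists_R
  obtain ⟨Q, hQ⟩ := hk.supp.exists_bound_of_continuous hk.cont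
  have hQ' : ∀ y, k y ≤ |Q| + 1 := fun y => by
    have h1 := hQ y
    have h2 := le_abs_self Q
    have h3 := le_abs_self (k y)
    rw [Real.norm_eq_abs] at h1
    linarith
  refine ⟨R, K * (|Q| + 1), by have := H.hK; positivity, fun x => ?_⟩
  have h1 : conv k (deriv φ) x ≤ (|Q| + 1) * (φ (x + R) - φ (x - R)) := by
    have e1 : conv k (deriv φ) x = ∫ y in (-R)..R, k y * deriv φ (x - y) := by
      rw [intervalIntegral.integral_of_le (by linarith), ← integral_Icc_eq_integral_Ioc]
      unfold conv
      refine (setIntegral_eq_integral_of_forall_compl_eq_zero fun y hy => ?_).symm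
      rw [hR' y, zero_mul]
      by_contra! hlt
      exact hy (_root_.abs_le.1 hlt)
    have hc : Continuous fun y => deriv φ (x - y) :=
      W.dcont.comp (continuous_const.sub continuous_id)
    have e2 : ∫ y in (-R)..R, deriv φ (x - y) = φ (x + R) - φ (x - R) := by
      rw [intervalIntegral.integral_comp_sub_left (fun y => deriv φ y) x, sub_neg_eq_add]
      exact intervalIntegral.integral_deriv_eq_sub
        (fun y _ => W.smooth.differentiable one_ne_zero y)
        (W.dcont.intervalIntegrable _ _)
    rw [e1, ← e2, ← intervalIntegral.integral_const_mul]
    refine intervalIntegral.integral_mono_on (by linarith)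
      ((hk.cont.mul hc).intervalIntegrable _ _)
      ((continuous_const.mul hc).intervalIntegrable _ _) fun y _ => ?_
    exact mul_le_mul_of_nonneg_right (hQ' y) (W.dnonneg _)
  have h2 : 0 ≤ conv k (deriv φ) x :=
    integral_nonneg fun y => mul_nonneg (hk.nonneg y) (W.dnonneg _)
  rw [W.deriv_eq hk H, mul_assoc]
  exact mul_le_mul (H.bd _) h1 h2 H.hK.le

theorem Wave.deriv_small (W : Wave g k φ) (hk : Kern k) (H : NL g g' μ ρ K) {η : ℝ} (hη : 0 < η) :
    ∃ M > 0, ∀ x, M ≤ |x| → deriv φ x ≤ η := by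
  obtain ⟨R, C, hC, h⟩ := W.deriv_le hk H
  have t1 : Tendsto (fun x => C * (φ (x + R) - φ (x - R))) atTop (𝓝 0) := by
    have := ((W.top.comp (tendsto_atTop_add_const_right _ R tendsto_id)).sub
      (W.top.comp (tendsto_atTop_add_const_right _ (-R) tendsto_id))).const_mul C
    simpa [Function.comp_def, sub_eq_add_neg] using this
  have t2 : Tendsto (fun x => C * (φ (x + R) - φ (x - R))) atBot (𝓝 0) := by
    have := ((W.bot.comp (tendsto_atBot_add_const_right _ R tendsto_id)).sub
      (W.bot.comp (tendsto_atBot_add_const_right _ (-R) tendsto_id))).const_mul C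
    simpa [Function.comp_def, sub_eq_add_neg] using this
  obtain ⟨a, ha⟩ := eventually_atTop.1 (t1.eventually (gt_mem_nhds hη))
  obtain ⟨b, hb⟩ := eventually_atBot.1 (t2.eventually (gt_mem_nhds hη))
  refine ⟨max (max a (-b)) 1, by positivity, fun x hx => (h x).trans ?_⟩
  have m1 : a ≤ max (max a (-b)) 1 := (le_max_left _ _).trans (le_max_left _ _)
  have m2 : -b ≤ max (max a (-b)) 1 := (le_max_right _ _).trans (le_max_left _ _)
  rcases le_abs.1 hx with h | h
  · exact (ha x (m1.trans h)).le
  · exact (hb x (by linarith)).le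

/-- The core one-step estimate. -/
theorem Wave.core (W : Wave g k φ) (hk : Kern k) (H : NL g g' μ ρ K) :
    ∃ δ σ, 0 < δ ∧ δ ≤ 1 ∧ 0 < σ ∧ ∀ β, 0 ≤ β → β ≤ δ → ∀ x,
      g (conv k φ x + β) ≤ φ (x + σ * β) + μ * β ∧
      φ (x - σ * β) - μ * β ≤ g (conv k φ x - β) := by
  obtain ⟨R, hR, hR'⟩ := hk.exists_R
  have hRk : ∀ y, k y ≠ 0 → |y| ≤ R := fun y hy => by
    by_contra! hlt
    exact hy (hR' y hlt)
  have hρ := H.hρ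
  have hρ1 := H.hρ1
  have hK := H.hK
  have hμ0 := H.hμ0
  obtain ⟨a, ha⟩ := eventually_atBot.1 (W.bot.eventually (gt_mem_nhds (show 0 < ρ / 2 by linarith)))
  obtain ⟨b, hb⟩ := eventually_atTop.1
    (W.top.eventually (lt_mem_nhds (show 1 - ρ / 2 < 1 by linarith)))
  -- outside `[a - R, b + R]` we are in the contraction regions
  have hleft : ∀ x, x < a - R → conv k φ x ≤ ρ / 2 := fun x hx =>
    (W.A_le hk (z := x + R) fun y hy => by
      have := abs_le.1 (hRk y hy); linarith).trans (ha _ (by linarith)).le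
  have hright : ∀ x, b + R < x → 1 - ρ / 2 ≤ conv k φ x := fun x hx =>
    (hb _ (by linarith)).le.trans (W.le_A hk (z := x - R) fun y hy => by
      have := abs_le.1 (hRk y hy); linarith)
  obtain ⟨c, hc, hc'⟩ : ∃ c > 0, ∀ x, a - R - 1 ≤ x → x ≤ b + R + 1 → c ≤ deriv φ x := by
    rcases le_or_gt (a - R - 1) (b + R + 1) with hle | hlt
    · obtain ⟨z, _, hz⟩ := (isCompact_Icc (a := a - R - 1) (b := b + R + 1)).exists_isMinOn
        (Set.nonempty_Icc.2 hle) W.dcont.continuousOn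
      exact ⟨deriv φ z, W.deriv_pos hk H z, fun x h1 h2 => hz ⟨h1, h2⟩⟩
    · exact ⟨1, one_pos, fun x h1 h2 => by linarith⟩
  have hinc : ∀ x y, a - R - 1 ≤ x → x ≤ y → y ≤ b + R + 1 → c * (y - x) ≤ φ y - φ x := by
    intro x y h1 h2 h3
    refine (convex_Icc (a - R - 1) (b + R + 1)).mul_sub_le_image_sub_of_le_deriv
      W.cont.continuousOn (fun z _ => (W.hasDeriv z).differentiableAt.differentiableWithinAt)
      (fun z hz => ?_) x ⟨h1, h2.trans h3⟩ y ⟨h1.trans h2, h3⟩ h2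
    have := interior_subset hz
    exact hc' z this.1 this.2
  have hσ : 0 < K / c := by positivity
  refine ⟨min (min (ρ / 2) 1) (c / K), K / c, by positivity,
    (min_le_left _ _).trans (min_le_right _ _), hσ, fun β hβ0 hβ x => ?_⟩
  have hβ1 : β ≤ ρ / 2 := hβ.trans ((min_le_left _ _).trans (min_le_left _ _))
  have hβ2 : K / c * β ≤ 1 := by
    have : β ≤ c / K := hβ.trans (min_le_right _ _)
    calc K / c * β ≤ K / c * (c / K) := by gcongr
      _ = 1 := by field_simp
  have hβ3 : 0 ≤ K / c * β := by positivity
  have hcK : c * (K / c * β) = K * β := by field_simp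
  have hμβ : 0 ≤ μ * β := by positivity
  have m1 : φ x ≤ φ (x + K / c * β) := W.mono (by linarith)
  have m2 : φ (x - K / c * β) ≤ φ x := W.mono (by linarith)
  have e := W.eq x
  rcases lt_or_ge x (a - R) with hx | hx
  · have hA := hleft x hx
    have h1 := H.glo (s := conv k φ x) (t := conv k φ x + β) (by linarith) (by linarith)
    have h2 := H.glo (s := conv k φ x - β) (t := conv k φ x) (by linarith) (by linarith)
    rw [← e] at h1 h2
    constructor <;> linarith
  rcases lt_or_ge (b + R) x with hx' | hx'
  · have hA := hright x hx'
    have h1 := H.ghi (s := conv k φ x) (t := conv k φ x + β) (by linarith) (by linarith)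
    have h2 := H.ghi (s := conv k φ x - β) (t := conv k φ x) (by linarith) (by linarith)
    rw [← e] at h1 h2
    constructor <;> linarith
  · have h1 := H.glip (s := conv k φ x) (t := conv k φ x + β) (by linarith)
    have h2 := H.glip (s := conv k φ x - β) (t := conv k φ x) (by linarith)
    rw [← e] at h1 h2
    have i1 := hinc x (x + K / c * β) (by linarith) (by linarith) (by linarith)
    have i2 := hinc (x - K / c * β) x (by linarith) (by linarith) (by linarith)
    have r1 : c * (x + K / c * β - x) = K * β := by rw [← hcK]; ring
    have r2 : c * (x - (x - K / c * β)) = K * β := by rw [← hcK]; ring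
    rw [r1] at i1
    rw [r2] at i2
    constructor <;> linarith

end wave

end OLW

namespace OLW

/-- Uniform convergence along an ultrafilter, from equicontinuity and tail control. -/
theorem compactness (F : Ultrafilter ℕ) (v : ℕ → ℝ → ℝ) (c : ℝ → ℝ) (C : ℝ)
    (hb : ∀ n x, |v n x| ≤ C)
    (heq : ∀ ε > 0, ∃ δ > 0, ∀ n x x', |x - x'| < δ → |v n x - v n x'| ≤ ε)
    (htail : ∀ ε > 0, ∃ M, ∀ᶠ n in (F : Filter ℕ), ∀ x, M ≤ |x| → |v n x - c x| ≤ ε) :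
    ∃ w : ℝ → ℝ, Continuous w ∧ (∀ x, |w x| ≤ C) ∧
      ∀ ε > 0, ∀ᶠ n in (F : Filter ℕ), ∀ x, |v n x - w x| ≤ ε := by
  have hlim : ∀ x, ∃ y, Tendsto (fun n => v n x) F (𝓝 y) := by
    intro x
    obtain ⟨y, _, hy⟩ := (isCompact_Icc (a := -C) (b := C)).ultrafilter_le_nhds
      (F.map fun n => v n x) (by
        rw [Ultrafilter.coe_map, le_principal_iff, mem_map]
        exact Eventually.of_forall fun n => abs_le.1 (hb n x))
    exact ⟨y, hy⟩
  choose w hw using hlim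
  have hwe : ∀ ε > 0, ∃ δ > 0, ∀ x x', |x - x'| < δ → |w x - w x'| ≤ ε := by
    intro ε hε
    obtain ⟨δ, hδ, h⟩ := heq ε hε
    exact ⟨δ, hδ, fun x x' hx => le_of_tendsto ((hw x).sub (hw x')).abs
      (Eventually.of_forall fun n => h n x x' hx)⟩
  refine ⟨w, ?_, fun x => le_of_tendsto (hw x).abs (Eventually.of_forall fun n => hb n x), ?_⟩
  · rw [Metric.continuous_iff]
    intro x ε hε
    obtain ⟨δ, hδ, h⟩ := hwe (ε / 2) (by linarith)
    refine ⟨δ, hδ, fun y hy => ?_⟩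
    rw [Real.dist_eq] at hy ⊢
    exact lt_of_le_of_lt (h y x hy) (by linarith)
  · intro ε hε
    obtain ⟨M, hM⟩ := htail (ε / 2) (by linarith)
    have hwt : ∀ x, M ≤ |x| → |w x - c x| ≤ ε / 2 := by
      intro x hx
      refine le_of_tendsto ((hw x).sub_const (c x)).abs ?_
      filter_upwards [hM] with n hn using hn x hx
    have hcomp : ∀ᶠ n in (F : Filter ℕ), ∀ x ∈ Set.Icc (-M) M, |v n x - w x| ≤ ε := by
      refine (isCompact_Icc (a := -M) (b := M)).induction_on
        (p := fun s => ∀ᶠ n in (F : Filter ℕ), ∀ x ∈ s, |v n x - w x| ≤ ε) ?_ ?_ ?_ ?_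
      · simp
      · intro s t hst ht
        filter_upwards [ht] with n hn x hx using hn x (hst hx)
      · intro s t hs ht
        filter_upwards [hs, ht] with n h1 h2 x hx
        exact hx.elim (h1 x) (h2 x)
      · intro x _
        obtain ⟨d1, hd1, h1⟩ := heq (ε / 3) (by linarith)
        obtain ⟨d2, hd2, h2⟩ := hwe (ε / 3) (by linarith)
        refine ⟨Metric.ball x (min d1 d2), mem_nhdsWithin_of_mem_nhds
          (Metric.ball_mem_nhds x (lt_min hd1 hd2)), ?_⟩
        filter_upwards [(hw x).eventually (Metric.ball_mem_nhds (w x) (show 0 < ε / 3 by linarith))]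
          with n hn y hy
        rw [Real.dist_eq] at hn
        rw [Metric.mem_ball, Real.dist_eq] at hy
        have a1 := abs_le.1 (h1 n y x (hy.trans_le (min_le_left _ _)))
        have a2 := abs_le.1 (h2 y x (hy.trans_le (min_le_right _ _)))
        have a3 := abs_lt.1 hn
        rw [abs_le]; constructor <;> linarith
    filter_upwards [hM, hcomp] with n h1 h2 x
    rcases le_or_gt M |x| with hx | hx
    · have a1 := abs_le.1 (h1 x hx)
      have a2 := abs_le.1 (hwt x hx)
      rw [abs_le]; constructor <;> linarith
    · exact h2 x (abs_le.1 hx.le)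

section main
variable {g g' k φ : ℝ → ℝ} {μ ρ K : ℝ}

theorem Wave.iter (W : Wave g k φ) (hk : Kern k) (H : NL g g' μ ρ K) {δ σ : ℝ}
    (hσ : 0 < σ)
    (hcore : ∀ β, 0 ≤ β → β ≤ δ → ∀ x,
      g (conv k φ x + β) ≤ φ (x + σ * β) + μ * β ∧
      φ (x - σ * β) - μ * β ≤ g (conv k φ x - β)) {u : ℕ → ℝ → ℝ}
    (hm : ∀ n, Measurable (u n)) (hb : ∀ n, ∃ C, ∀ x, |u n x| ≤ C)
    (hrec : ∀ n x, u (n + 1) x = g (conv k (u n) x)) {β : ℝ} (hβ0 : 0 ≤ β) (hβ : β ≤ δ)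
    (n : ℕ) (b : ℝ) :
    ((∀ x, u n x ≤ φ (x + b) + β) →
      ∀ m x, u (n + m) x ≤ φ (x + (b + σ / (1 - μ) * β)) + β * μ ^ m) ∧
    ((∀ x, φ (x + b) - β ≤ u n x) →
      ∀ m x, φ (x + (b - σ / (1 - μ) * β)) - β * μ ^ m ≤ u (n + m) x) := by
  have hμ0 := H.hμ0
  have hμ1 := H.hμ1
  have h1μ : 0 < 1 - μ := by linarith
  have hpow0 : ∀ m : ℕ, 0 ≤ μ ^ m := fun m => by positivity
  have hpow1 : ∀ m : ℕ, μ ^ m ≤ 1 := fun m => pow_le_one₀ hμ0.le hμ1.le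
  have hτ : 0 < σ / (1 - μ) := by positivity
  have hτσ : σ / (1 - μ) * (1 - μ) = σ := by field_simp
  set τ := σ / (1 - μ)
  have bm : ∀ c : ℝ, Measurable fun y => φ (y + c) := fun c =>
    W.meas.comp (measurable_id.add_const c)
  have hab : ∀ c d x : ℝ, |φ (x + c) + d| ≤ 1 + |d| := fun c d x =>
    (abs_add_le _ _).trans (by linarith [W.abs_le_one (x + c)])
  constructor
  · intro h0
    have key : ∀ m x, u (n + m) x ≤ φ (x + (b + τ * β * (1 - μ ^ m))) + β * μ ^ m := by
      intro m
      induction m with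
      | zero => simpa using h0
      | succ m ih =>
        intro x
        obtain ⟨C, hC⟩ := hb (n + m)
        have h1 := hk.conv_mono (hm (n + m)) ((bm _).add_const _) hC (hab _ _) ih x
        rw [hk.conv_add_const (bm _) (fun y => W.abs_le_one _), conv_shift] at h1
        have h2 := H.gmono h1
        rw [← hrec] at h2
        have h3 := (hcore (β * μ ^ m) (mul_nonneg hβ0 (hpow0 m))
          ((mul_le_of_le_one_right hβ0 (hpow1 m)).trans hβ) (x + (b + τ * β * (1 - μ ^ m)))).1
        have h4 := h2.trans h3
        have e1 : x + (b + τ * β * (1 - μ ^ m)) + σ * (β * μ ^ m)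
            = x + (b + τ * β * (1 - μ ^ (m + 1))) := by
          rw [← hτσ]; ring
        have e2 : μ * (β * μ ^ m) = β * μ ^ (m + 1) := by ring
        rw [e1, e2] at h4
        exact h4
    intro m x
    refine (key m x).trans ?_
    have : φ (x + (b + τ * β * (1 - μ ^ m))) ≤ φ (x + (b + τ * β)) := by
      apply W.mono
      have : 0 ≤ τ * β * μ ^ m := mul_nonneg (mul_nonneg hτ.le hβ0) (hpow0 m)
      linarith
    linarith
  · intro h0
    have key : ∀ m x, φ (x + (b - τ * β * (1 - μ ^ m))) - β * μ ^ m ≤ u (n + m) x := by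
      intro m
      induction m with
      | zero => simpa using h0
      | succ m ih =>
        intro x
        obtain ⟨C, hC⟩ := hb (n + m)
        have h1 := hk.conv_mono ((bm _).add_const _) (hm (n + m)) (hab _ _) hC
          (fun y => by rw [← sub_eq_add_neg]; exact ih y) x
        rw [hk.conv_add_const (bm _) (fun y => W.abs_le_one _), conv_shift, ← sub_eq_add_neg] at h1
        have h2 := H.gmono h1
        rw [← hrec] at h2
        have h3 := (hcore (β * μ ^ m) (mul_nonneg hβ0 (hpow0 m))
          ((mul_le_of_le_one_right hβ0 (hpow1 m)).trans hβ) (x + (b - τ * β * (1 - μ ^ m)))).2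
        have h4 := h3.trans h2
        have e1 : x + (b - τ * β * (1 - μ ^ m)) - σ * (β * μ ^ m)
            = x + (b - τ * β * (1 - μ ^ (m + 1))) := by
          rw [← hτσ]; ring
        have e2 : μ * (β * μ ^ m) = β * μ ^ (m + 1) := by ring
        rw [e1, e2] at h4
        exact h4
    intro m x
    refine le_trans ?_ (key m x)
    have : φ (x + (b - τ * β)) ≤ φ (x + (b - τ * β * (1 - μ ^ m))) := by
      apply W.mono
      have : 0 ≤ τ * β * μ ^ m := mul_nonneg (mul_nonneg hτ.le hβ0) (hpow0 m)
      linarith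
    linarith

theorem Wave.main (W : Wave g k φ) (hk : Kern k) (H : NL g g' μ ρ K) :
    ∃ δ₀ > (0 : ℝ), ∀ (ξm ξp β₀ : ℝ) (u : ℕ → ℝ → ℝ),
      0 ≤ β₀ → β₀ ≤ δ₀ →
      (∀ n, Measurable (u n)) → (∀ n, ∃ C, ∀ x, |u n x| ≤ C) →
      (∀ (n : ℕ) (x : ℝ), u (n + 1) x = g (conv k (u n) x)) →
      (∀ x : ℝ, φ (x + ξm) - β₀ ≤ u 0 x ∧ u 0 x ≤ φ (x + ξp) + β₀) →
      ∃ (ξbar : ℝ) (nk : ℕ → ℕ), StrictMono nk ∧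
        Tendsto (fun k : ℕ => ⨆ x : ℝ, |u (nk k) x - φ (x + ξbar)|) atTop (𝓝 0) := by
  obtain ⟨δ, σ, hδ, hδ1, hσ, hcore⟩ := W.core hk H
  have hμ0 := H.hμ0
  have hμ1 := H.hμ1
  have hK := H.hK
  have h1μ : 0 < 1 - μ := by linarith
  have hpow0 : ∀ m : ℕ, 0 ≤ μ ^ m := fun m => by positivity
  have hpow1 : ∀ m : ℕ, μ ^ m ≤ 1 := fun m => pow_le_one₀ hμ0.le hμ1.le
  have hpt : ∀ β : ℝ, ∀ ε > 0, ∀ᶠ m : ℕ in atTop, β * μ ^ m < ε := by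
    intro β ε hε
    have := (tendsto_pow_atTop_nhds_zero_of_lt_one hμ0.le hμ1).const_mul β
    rw [mul_zero] at this
    exact this.eventually (gt_mem_nhds hε)
  refine ⟨δ, hδ, fun ξm ξp β₀ u hβ0 hβ hm hb hrec hstart => ?_⟩
  have hτ : 0 < σ / (1 - μ) := by positivity
  have hiter := fun (β : ℝ) (h0 : 0 ≤ β) (h1 : β ≤ δ) =>
    W.iter hk H hσ hcore hm hb hrec h0 h1
  set τ := σ / (1 - μ) with hτdef
  -- the trap
  set bp := ξp + τ * β₀ with hbp
  set bm := ξm - τ * β₀ with hbm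
  have hup : ∀ n x, u n x ≤ φ (x + bp) + β₀ * μ ^ n := by
    intro n x
    have := (hiter β₀ hβ0 hβ 0 ξp).1 (fun x => (hstart x).2) n x
    rwa [zero_add] at this
  have hlo : ∀ n x, φ (x + bm) - β₀ * μ ^ n ≤ u n x := by
    intro n x
    have := (hiter β₀ hβ0 hβ 0 ξm).2 (fun x => (hstart x).1) n x
    rwa [zero_add] at this
  have hβμ : ∀ n : ℕ, β₀ * μ ^ n ≤ 1 := fun n =>
    (mul_le_of_le_one_right hβ0 (hpow1 n)).trans (hβ.trans hδ1)
  have hu2 : ∀ n x, |u n x| ≤ 2 := by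
    intro n x
    have := hup n x
    have := hlo n x
    have := hβμ n
    have := W.nonneg (x + bm)
    have := W.le_one (x + bp)
    rw [abs_le]; constructor <;> linarith
  -- the ultrafilter
  set F : Ultrafilter ℕ := hyperfilter ℕ with hF
  have hFtop : (F : Filter ℕ) ≤ atTop := Nat.hyperfilter_le_atTop
  have hW : ∀ j : ℕ, ∃ w : ℝ → ℝ, Continuous w ∧ (∀ x, |w x| ≤ 2) ∧
      ∀ ε > 0, ∀ᶠ n in (F : Filter ℕ), ∀ x, |u (n + 1 + j) x - w x| ≤ ε := by
    intro j
    refine compactness F (fun n => u (n + 1 + j)) (fun x => if x < 0 then 0 else 1) 2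
      (fun n x => hu2 _ x) ?_ ?_
    · intro ε hε
      obtain ⟨d, hd, h⟩ := hk.equicont (C := 2) (ε := ε / K) (by norm_num) (by positivity)
      refine ⟨d, hd, fun n x x' hx => ?_⟩
      have e : n + 1 + j = n + j + 1 := by ring
      simp only [e]
      rw [hrec, hrec]
      refine (H.gdist _ _).trans ?_
      have := h (u (n + j)) (hm _) (hu2 _) x x' hx
      rw [le_div_iff₀ hK] at this
      linarith
    · intro ε hε
      obtain ⟨a, ha⟩ := eventually_atBot.1
        (W.bot.eventually (gt_mem_nhds (show 0 < ε / 2 by linarith)))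
      obtain ⟨b, hb'⟩ := eventually_atTop.1
        (W.top.eventually (lt_mem_nhds (show 1 - ε / 2 < 1 by linarith)))
      refine ⟨max (max (bp - a) (b - bm)) 1, ?_⟩
      obtain ⟨N, hN⟩ := eventually_atTop.1 (hpt β₀ (ε / 2) (by linarith))
      filter_upwards [hFtop (eventually_ge_atTop N)] with n hn x hx
      have hs := hN (n + 1 + j) (by omega)
      have m1 := (le_max_left _ _).trans ((le_max_left _ _).trans hx)
      have m2 := (le_max_right _ _).trans ((le_max_left _ _).trans hx)
      have g1 := hup (n + 1 + j) x
      have g2 := hlo (n + 1 + j) x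
      have g3 := W.nonneg (x + bm)
      have g4 := W.le_one (x + bp)
      split_ifs with hx0
      · rw [abs_of_neg hx0] at m1
        have := ha (x + bp) (by linarith)
        rw [abs_le]; constructor <;> linarith
      · rw [abs_of_nonneg (not_lt.1 hx0)] at m2
        have := hb' (x + bm) (by linarith)
        rw [abs_le]; constructor <;> linarith
  choose w hwc hwb hwu using hW
  -- the recursion for the limit
  have hwrec : ∀ j x, w (j + 1) x = g (conv k (w j) x) := by
    intro j x
    by_contra hne
    have hd : 0 < |w (j + 1) x - g (conv k (w j) x)| := abs_pos.2 (sub_ne_zero.2 hne)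
    set d := |w (j + 1) x - g (conv k (w j) x)| with hdd
    set ε := d / (2 * (1 + K)) with hε
    have hεp : 0 < ε := by positivity
    have hεd : ε * (2 * (1 + K)) = d := by rw [hε]; field_simp
    obtain ⟨n, h1, h2⟩ := ((hwu j ε hεp).and (hwu (j + 1) ε hεp)).exists
    have h3 := hk.conv_dist (hm (n + 1 + j)) (hwc j).measurable (hu2 _) (hwb j) h1 x
    have h4 := (H.gdist (conv k (u (n + 1 + j)) x) (conv k (w j) x)).trans
      (mul_le_mul_of_nonneg_left h3 hK.le)
    rw [← hrec] at h4
    have h5 := h2 x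
    have e : n + 1 + (j + 1) = n + 1 + j + 1 := by ring
    rw [e] at h5
    have h6 : d ≤ ε + K * ε := by
      rw [hdd]
      have := abs_le.1 h4
      have := abs_le.1 h5
      rw [abs_le]; constructor <;> linarith
    nlinarith
  have hw0 : ∀ j x, 0 ≤ w j x := by
    intro j x
    refine le_of_forall_pos_le_add fun ε hε => ?_
    obtain ⟨n, h1, h2⟩ := ((hwu j (ε / 2) (by linarith)).and
      (hFtop (((tendsto_add_atTop_nat (1 + j)).eventually (hpt β₀ (ε / 2) (by linarith)))))).exists
    have h3 := hlo (n + (1 + j)) x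
    rw [← add_assoc] at h3 h2
    have h4 := abs_le.1 (h1 x)
    have := W.nonneg (x + bm)
    linarith
  -- the set of admissible upper shifts
  set 𝓑 : Set ℝ := {b | ∃ n β, 0 ≤ β ∧ β ≤ δ ∧ ∀ x, u n x ≤ φ (x + (b - τ * β)) + β} with h𝓑
  have hev : ∀ b ∈ 𝓑, ∀ ε > 0, ∀ᶠ N in atTop, ∀ x, u N x ≤ φ (x + b) + ε := by
    rintro b ⟨n, β, h0, h1, h2⟩ ε hε
    have h3 := (hiter β h0 h1 n (b - τ * β)).1 h2
    obtain ⟨N, hN⟩ := eventually_atTop.1 (hpt β ε hε)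
    filter_upwards [eventually_ge_atTop (n + N)] with m hmn x
    have h4 := h3 (m - n) x
    rw [Nat.add_sub_cancel' (by omega), sub_add_cancel] at h4
    have := hN (m - n) (by omega)
    linarith
  have h𝓑ne : 𝓑.Nonempty := by
    refine ⟨bp, 0, β₀, hβ0, hβ, fun x => ?_⟩
    have e : bp - τ * β₀ = ξp := by rw [hbp]; ring
    rw [e]; exact (hstart x).2
  have h𝓑bd : BddBelow 𝓑 := by
    refine ⟨bm, fun b hbB => ?_⟩
    rw [← (W.strictMono hk H).le_iff_le]
    refine le_of_forall_pos_le_add fun ε hε => ?_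
    obtain ⟨n, h1, h2⟩ := ((hev b hbB (ε / 2) (by linarith)).and
      (hpt β₀ (ε / 2) (by linarith))).exists
    have h3 := h1 0
    have h4 := hlo n 0
    rw [zero_add] at h3 h4
    linarith
  set B := sInf 𝓑 with hB
  have hwB : ∀ j x, w j x ≤ φ (x + B) := by
    intro j x
    have hb1 : ∀ b ∈ 𝓑, w j x ≤ φ (x + b) := by
      intro b hbB
      refine le_of_forall_pos_le_add fun ε hε => ?_
      obtain ⟨n, h1, h2⟩ := ((hwu j (ε / 2) (by linarith)).and
        (hFtop (((tendsto_add_atTop_nat (1 + j)).eventually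
          (hev b hbB (ε / 2) (by linarith)))))).exists
      have h3 := h2 x
      rw [← add_assoc] at h3
      have h4 := abs_le.1 (h1 x)
      linarith
    have hb2 : ∀ e > 0, w j x ≤ φ (x + (B + e)) := by
      intro e he
      obtain ⟨b, hbB, hlt⟩ := Real.lt_sInf_add_pos h𝓑ne he
      exact (hb1 b hbB).trans (W.mono (by linarith))
    have ht : Tendsto (fun e => φ (x + (B + e))) (𝓝[>] 0) (𝓝 (φ (x + B))) := by
      have hc : Continuous fun e => φ (x + (B + e)) := W.cont.comp (by fun_prop)
      have := hc.tendsto 0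
      rw [add_zero] at this
      exact this.mono_left nhdsWithin_le_nhds
    refine ge_of_tendsto ht ?_
    filter_upwards [self_mem_nhdsWithin] with e he using hb2 e he
  -- the squeeze
  have hmvt : ∀ (C a b : ℝ), a ≤ b → (∀ x ∈ Set.Icc a b, deriv φ x ≤ C) →
      φ b - φ a ≤ C * (b - a) := by
    intro C a b hab hC
    exact (convex_Icc a b).image_sub_le_mul_sub_of_deriv_le W.cont.continuousOn
      (fun z _ => (W.hasDeriv z).differentiableAt.differentiableWithinAt)
      (fun z hz => hC z (interior_subset hz)) a ⟨le_rfl, hab⟩ b ⟨hab, le_rfl⟩ hab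
  have hfin : ∀ x, w 0 x = φ (x + B) := by
    by_contra! hcon
    obtain ⟨x₀, hx₀⟩ := hcon
    have hx₀' : w 0 x₀ < φ (x₀ + B) := lt_of_le_of_ne (hwB 0 x₀) hx₀
    set η := 1 / (4 * τ) with hη
    have hηp : 0 < η := by positivity
    have hητ : τ * η = 1 / 4 := by rw [hη]; field_simp
    obtain ⟨M₀, hM₀, hsmall⟩ := W.deriv_small hk H hηp
    set M := M₀ + |B| + 1 with hM
    have hMp : 0 < M := by positivity
    obtain ⟨N, hN⟩ := W.spread hk H (fun n => {x | w n x < φ (x + B)}) (x₀ := x₀)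
      (fun n y s hy hs => by
        have hcB : Continuous fun z => φ (z + B) := W.cont.comp (continuous_add_const B)
        have hA : 0 < conv k (fun z => φ (z + B) - w n z) (y + s) :=
          hk.conv_pos (hcB.sub (hwc n)) (fun z => sub_nonneg.2 (hwB n z)) hs
            (by simpa using hy)
        rw [hk.conv_sub hcB.measurable (hwc n).measurable (fun z => W.abs_le_one _) (hwb n),
          conv_shift] at hA
        have hnn : 0 ≤ conv k (w n) (y + s) :=
          integral_nonneg fun z => mul_nonneg (hk.nonneg z) (hw0 n _)
        have h1 := W.A_le_one hk (y + s + B)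
        have h2 := H.gstrict ⟨hnn, by linarith⟩ ⟨W.A_nonneg hk _, h1⟩
          (show conv k (w n) (y + s) < conv k φ (y + s + B) by linarith)
        rw [← W.eq, ← hwrec] at h2
        exact h2) hx₀' M
    obtain ⟨κ, hκ, hgap⟩ : ∃ κ > 0, ∀ x, |x| ≤ M → κ ≤ φ (x + B) - w N x := by
      have hc : Continuous fun x => φ (x + B) - w N x :=
        (W.cont.comp (continuous_add_const B)).sub (hwc N)
      obtain ⟨z, hz, hz'⟩ := (isCompact_Icc (a := -M) (b := M)).exists_isMinOn
        (Set.nonempty_Icc.2 (by linarith)) hc.continuousOn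
      exact ⟨_, sub_pos.2 (hN z (abs_le.2 hz)), fun x hx => hz' (abs_le.1 hx)⟩
    obtain ⟨R, C, hC, hdC⟩ := W.deriv_le hk H
    have hdC' : ∀ x, deriv φ x ≤ C := fun x => (hdC x).trans (by
      have := W.nonneg (x - R)
      have := W.le_one (x + R)
      nlinarith)
    set e := min (min 1 (κ / C)) (δ / (2 * η)) with he
    have hep : 0 < e := by positivity
    have he1 : e ≤ 1 := (min_le_left _ _).trans (min_le_left _ _)
    have he2 : C * e ≤ κ := by
      have : e ≤ κ / C := (min_le_left _ _).trans (min_le_right _ _)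
      rw [le_div_iff₀ hC] at this
      linarith
    have he3 : 2 * (η * e) ≤ δ := by
      have : e ≤ δ / (2 * η) := min_le_right _ _
      rw [le_div_iff₀ (by positivity)] at this
      linarith
    have hηe : 0 < η * e := by positivity
    have hbound : ∀ x, w N x ≤ φ (x + (B - e)) + η * e := by
      intro x
      have harith : x + B - (x + (B - e)) = e := by ring
      rcases le_or_gt |x| M with hx | hx
      · have h1 := hgap x hx
        have h2 := hmvt C (x + (B - e)) (x + B) (by linarith) fun z _ => hdC' z
        rw [harith] at h2
        linarith
      · have h2 := hmvt η (x + (B - e)) (x + B) (by linarith) fun z hz => hsmall z (by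
          have hB1 := neg_abs_le B
          have hB2 := le_abs_self B
          rcases lt_abs.1 hx with h | h
          · exact le_trans (by linarith [hz.1]) (le_abs_self z)
          · exact le_trans (by linarith [hz.2]) (neg_le_abs z))
        rw [harith] at h2
        have := hwB N x
        linarith
    obtain ⟨n, hn⟩ := (hwu N (η * e) hηe).exists
    have hmem : B - e / 2 ∈ 𝓑 := by
      refine ⟨n + 1 + N, 2 * (η * e), by positivity, he3, fun x => ?_⟩
      have e1 : B - e / 2 - τ * (2 * (η * e)) = B - e := by
        linear_combination (-2 * e) * hητ
      rw [e1]
      have h1 := abs_le.1 (hn x)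
      have h2 := hbound x
      linarith
    have := csInf_le h𝓑bd hmem
    linarith
  -- extraction of the subsequence
  have hfreq : ∀ i : ℕ, ∃ᶠ n in atTop, ∀ x, |u n x - φ (x + B)| ≤ 1 / ((i : ℝ) + 1) := by
    intro i
    rw [frequently_atTop]
    intro a
    obtain ⟨n, h1, h2⟩ := ((hwu 0 (1 / ((i : ℝ) + 1)) (by positivity)).and
      (hFtop (eventually_ge_atTop a))).exists
    refine ⟨n + 1 + 0, by omega, fun x => ?_⟩
    rw [← hfin x]
    exact h1 x
  obtain ⟨nk, hnk, hnk'⟩ := extraction_forall_of_frequently hfreq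
  refine ⟨B, nk, hnk, ?_⟩
  refine squeeze_zero (fun i => Real.iSup_nonneg fun x => abs_nonneg _)
    (fun i => ciSup_le (hnk' i)) tendsto_one_div_add_atTop_nhds_zero_nat

end main

end OLW

/-- The ω-limit set of the bistable recursion in the moving frame contains a shift of the
traveling wave: if the initial condition is trapped between shifts of the wave up to a
small error `β₀ ≤ δ₀`, then along a subsequence the solution converges uniformly to a
shift of the wave. -/
theorem omega_limit_contains_wave (S : BistableSetting) (ℓ : ℝ) (φ : ℝ → ℝ)
    (h : IsTravelingWave S ℓ φ) :
    ∃ δ₀ > (0 : ℝ), ∀ (ξm ξp β₀ : ℝ) (u : ℕ → ℝ → ℝ),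
      0 ≤ β₀ → β₀ ≤ δ₀ →
      (∀ n, Measurable (u n)) → (∀ n, ∃ C, ∀ x, |u n x| ≤ C) →
      (∀ (n : ℕ) (x : ℝ), u (n + 1) x = S.g (conv (qshift S.q ℓ) (u n) x)) →
      (∀ x : ℝ, φ (x + ξm) - β₀ ≤ u 0 x ∧ u 0 x ≤ φ (x + ξp) + β₀) →
      ∃ (ξbar : ℝ) (nk : ℕ → ℕ), StrictMono nk ∧
        Tendsto (fun k : ℕ => ⨆ x : ℝ, |u (nk k) x - φ (x + ξbar)|) atTop (𝓝 0) := by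
  obtain ⟨g', μ, ρ, K, H⟩ := OLW.NL_of_setting S
  exact OLW.Wave.main ⟨h.mono, h.smooth, h.wave_eq, h.limit_bot, h.limit_top⟩
    (OLW.Kern_of_setting S ℓ) H
end
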